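/- Let n ≥ 6 with n ≢ 2 (mod 3). For a generic choice of a linear subspace L ⊂ ℂ^{n+1} of dimension n−2 (codimension 3), of n(n−1)/6 points l₁,…,l_{n(n−1)/6} ∈ L, and of n points p₁,…,pₙ ∈ ℂ^{n+1}, the ℂ-vector space of homogeneous cubic polynomials in ℂ[x₀,…,xₙ] that vanish at every point of L and are singular at all the points lᵢ and pⱼ has dimension n+1; moreover, the common singular locus of this space is zero-dimensional at each of the n points p₁,…,pₙ. -/

import Mathlib

/-!
A homogeneous cubic `f` is handled through its polarization `tri f`, a symmetric trilinear form `T`.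
Vanishing on the linear subspace `L` means `T = 0` on `L`, and being singular at `p` means
`T (p, p, ·) = 0` (`mem_SingSpace_iff`).

*Lower bound.* All cubics, minus those on `L`, minus three conditions for each point of `L` and `n + 1`
for each of the other `n` points, leave a space of dimension at least `n + 1` as soon as `L` has the
right dimension (`le_finrank`).

*Upper bound.* Given an index `k`, a configuration is called rigid if the cubics in question vanish
once `n + 1` suitable linear functionals do: `n - 1` coordinates of the linear form `T (p k, p k', ·)`
for some `k'`, and two more functionals. Rigidity is the nonvanishing of some minor, hence an open
condition (`Rigid.generic`), so a single rigid configuration suffices. For it, let `ε₀, ε₁, ε₂` be a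
basis of a complement of `L`, and let `v₀` and the `e x` form a basis of `L`. The points `p` are the
`ε a` and the `u (s x) + e x`, where `u S = S ε₀ + S² ε₁ + ε₂` and the `s x` are distinct and nonzero.
Being singular at these, together with `T (ε₀, ε₁, ·) = 0`, forces the pencil of quadratic forms
`T (u S, ·, ·)` on `L` into the shape `2 θ_x S (S - s x)` on the diagonal and
`θ_x S (S - s x) + θ_y S (S - s y) + t_{xy} (S - s x) (S - s y)` off the diagonal
(`Special.conic_diag`, `Special.conic_offdiag`). The indices `x` are grouped into triples, with one
index left over if `n ≡ 1` modulo `3`. Four or five points of `L` for each triple kill the pencil on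
the triple (`Special.tripleA`, `Special.tripleB`), and three points for each pair of triples kill
the mixed terms (`Special.pair_zero`). In total this uses `n (n - 1) / 6` points of `L`, and then
`T = 0` (`Special.caseA`, `Special.caseB`).

*Isolated singularities.* At a rigid configuration whose space of cubics has dimension `n + 1`, the
`n + 1` functionals take arbitrary values. Hence the common kernel of the Hessians at `p k` is spanned
by `p k` (`Rigid.finrank_le`). If `q` is another common singular point, then
`T (p + q, q - p, ·) = 0`, and for `q` close to `p` this forces `q` to be a multiple of `p`
(`isolated`).
-/

open MvPolynomial

noncomputable section

/-- The linear form `a₀x₀ + ⋯ + aₙxₙ` with coefficient vector `a`. -/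
def linForm {n : ℕ} (a : Fin (n + 1) → ℂ) : MvPolynomial (Fin (n + 1)) ℂ :=
  ∑ i, C (a i) * X i

/-- Evaluation at the point `v`, as a linear map. -/
def evalAt {n : ℕ} (v : Fin (n + 1) → ℂ) : MvPolynomial (Fin (n + 1)) ℂ →ₗ[ℂ] ℂ :=
  (aeval v).toLinearMap

/-- The linear map `f ↦ (∂f/∂xᵢ)(p)`. -/
def evalPDeriv {n : ℕ} (p : Fin (n + 1) → ℂ) (i : Fin (n + 1)) :
    MvPolynomial (Fin (n + 1)) ℂ →ₗ[ℂ] ℂ :=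
  evalAt p ∘ₗ (pderiv i).toLinearMap

/-- `f` is singular at `p`: all partial derivatives of `f` vanish at `p`. -/
def SingularAt {n : ℕ} (f : MvPolynomial (Fin (n + 1)) ℂ) (p : Fin (n + 1) → ℂ) : Prop :=
  ∀ i, evalPDeriv p i f = 0

/-- The space of homogeneous degree-`d` polynomials in `n+1` variables that vanish at every
point of `V` and are singular at every point of `S`. -/
def SingSpace (n : ℕ) (d : ℕ) (S V : Set (Fin (n + 1) → ℂ)) :
    Submodule ℂ (MvPolynomial (Fin (n + 1)) ℂ) :=
  homogeneousSubmodule (Fin (n + 1)) ℂ d ⊓ (⨅ v ∈ V, LinearMap.ker (evalAt v)) ⊓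
    ⨅ p ∈ S, ⨅ i, LinearMap.ker (evalPDeriv p i)

/-- A property of parameters `t : ι → ℂ` holds for a generic choice of `t` if there is a
nonzero polynomial `F` in the variables `ι` such that the property holds whenever
`F(t) ≠ 0`. -/
def Generic {ι : Type} [Fintype ι] (P : (ι → ℂ) → Prop) : Prop :=
  ∃ F : MvPolynomial ι ℂ, F ≠ 0 ∧ ∀ t : ι → ℂ, eval t F ≠ 0 → P t

end

/-! ### Polarization of cubics -/

section Polar

variable {n : ℕ}

lemma pderiv_comm' {σ : Type*} (i j : σ) (f : MvPolynomial σ ℂ) :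
    pderiv i (pderiv j f) = pderiv j (pderiv i f) := by
  classical
  have h : ⁅(pderiv i : Derivation ℂ (MvPolynomial σ ℂ) (MvPolynomial σ ℂ)),
      (pderiv j : Derivation ℂ (MvPolynomial σ ℂ) (MvPolynomial σ ℂ))⁆ = 0 := by
    apply MvPolynomial.derivation_ext
    intro k
    rw [Derivation.commutator_apply]
    simp [pderiv_X, Pi.single_apply, apply_ite]
  have := DFunLike.congr_fun h f
  rw [Derivation.commutator_apply] at this
  simpa [sub_eq_zero] using this

/-- The third partial derivative `∂ᵢ∂ⱼ∂ₖ f` at the origin, as a linear functional of `f`. -/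
noncomputable def tau (i j k : Fin (n + 1)) : MvPolynomial (Fin (n + 1)) ℂ →ₗ[ℂ] ℂ :=
  evalAt 0 ∘ₗ (pderiv i).toLinearMap ∘ₗ (pderiv j).toLinearMap ∘ₗ (pderiv k).toLinearMap

lemma tau_apply (i j k : Fin (n + 1)) (f : MvPolynomial (Fin (n + 1)) ℂ) :
    tau i j k f = eval 0 (pderiv i (pderiv j (pderiv k f))) := by
  simp [tau, evalAt, aeval_eq_eval]

lemma tau_swap12 (i j k : Fin (n + 1)) (f : MvPolynomial (Fin (n + 1)) ℂ) :
    tau i j k f = tau j i k f := by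
  rw [tau_apply, tau_apply, pderiv_comm']

lemma tau_swap23 (i j k : Fin (n + 1)) (f : MvPolynomial (Fin (n + 1)) ℂ) :
    tau i j k f = tau i k j f := by
  rw [tau_apply, tau_apply, pderiv_comm' j k]

/-- The polarization of the cubic `f`: the trilinear form `(a, b, c) ↦ D_a D_b D_c f`. For a
homogeneous cubic `f` one has `tri f v v v = 6 f(v)` and `tri f p p eᵢ = 2 (∂ᵢ f)(p)`. -/
noncomputable def tri (f : MvPolynomial (Fin (n + 1)) ℂ) :
    (Fin (n + 1) → ℂ) →ₗ[ℂ] (Fin (n + 1) → ℂ) →ₗ[ℂ] (Fin (n + 1) → ℂ) →ₗ[ℂ] ℂ :=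
  ∑ i, ∑ j, ∑ k, tau i j k f • (LinearMap.proj (φ := fun _ => ℂ) i).smulRight
    ((LinearMap.proj (φ := fun _ => ℂ) j).smulRight (LinearMap.proj (φ := fun _ => ℂ) k))

lemma tri_apply (f : MvPolynomial (Fin (n + 1)) ℂ) (a b c : Fin (n + 1) → ℂ) :
    tri f a b c = ∑ i, ∑ j, ∑ k, tau i j k f * (a i * (b j * c k)) := by
  simp [tri, LinearMap.sum_apply]

lemma tri_swap12 (f : MvPolynomial (Fin (n + 1)) ℂ) (a b c : Fin (n + 1) → ℂ) :
    tri f a b c = tri f b a c := by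
  rw [tri_apply, tri_apply, Finset.sum_comm]
  refine Finset.sum_congr rfl fun i _ => Finset.sum_congr rfl fun j _ =>
    Finset.sum_congr rfl fun k _ => ?_
  rw [tau_swap12]; ring

lemma tri_swap23 (f : MvPolynomial (Fin (n + 1)) ℂ) (a b c : Fin (n + 1) → ℂ) :
    tri f a b c = tri f a c b := by
  rw [tri_apply, tri_apply]
  refine Finset.sum_congr rfl fun i _ => ?_
  rw [Finset.sum_comm]
  refine Finset.sum_congr rfl fun j _ => Finset.sum_congr rfl fun k _ => ?_
  rw [tau_swap23]; ring

lemma euler_eval {d : ℕ} {f : MvPolynomial (Fin (n + 1)) ℂ} (hf : f.IsHomogeneous d)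
    (v : Fin (n + 1) → ℂ) : ∑ i, v i * eval v (pderiv i f) = d * eval v f := by
  have := congrArg (eval v) hf.sum_X_mul_pderiv
  simpa using this

lemma eval_const {f : MvPolynomial (Fin (n + 1)) ℂ} (hf : f.IsHomogeneous 0)
    (v w : Fin (n + 1) → ℂ) : eval v f = eval w f := by
  have := totalDegree_eq_zero_iff_eq_C.mp ((totalDegree_zero_iff_isHomogeneous (p := f)).mpr hf)
  rw [this]; simp

lemma tri_self_single {f : MvPolynomial (Fin (n + 1)) ℂ} (hf : f.IsHomogeneous 3)
    (p : Fin (n + 1) → ℂ) (k : Fin (n + 1)) :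
    tri f p p (Pi.single k 1) = 2 * evalPDeriv p k f := by
  have h2 : (pderiv k f).IsHomogeneous 2 := hf.pderiv
  have e2 := euler_eval h2 p
  have e1 : ∀ j, eval p (pderiv j (pderiv k f)) = ∑ i, p i * tau i j k f := by
    intro j
    have h1 : (pderiv j (pderiv k f)).IsHomogeneous 1 := h2.pderiv
    have := euler_eval h1 p
    rw [Nat.cast_one, one_mul] at this
    rw [← this]
    refine Finset.sum_congr rfl fun i _ => ?_
    have h0 : (pderiv i (pderiv j (pderiv k f))).IsHomogeneous 0 := h1.pderiv
    rw [tau_apply, eval_const h0 p 0]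
  simp only [e1] at e2
  have : evalPDeriv p k f = eval p (pderiv k f) := by simp [evalPDeriv, evalAt, aeval_eq_eval]
  rw [this, show (2 : ℂ) = ((2 : ℕ) : ℂ) by norm_num, ← e2, tri_apply, Finset.sum_comm]
  refine Finset.sum_congr rfl fun j _ => ?_
  rw [Finset.mul_sum]
  refine Finset.sum_congr rfl fun i _ => ?_
  simp [Pi.single_apply]
  ring

lemma tri_eq_sum (f : MvPolynomial (Fin (n + 1)) ℂ) (a b c : Fin (n + 1) → ℂ) :
    tri f a b c = ∑ i, c i * tri f a b (Pi.single i 1) := by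
  conv_lhs => rw [pi_eq_sum_univ' c]
  simp

lemma tri_self {f : MvPolynomial (Fin (n + 1)) ℂ} (hf : f.IsHomogeneous 3)
    (v : Fin (n + 1) → ℂ) : tri f v v v = 6 * evalAt v f := by
  rw [tri_eq_sum]
  simp only [tri_self_single hf]
  have := euler_eval hf v
  have h : ∀ i, evalPDeriv v i f = eval v (pderiv i f) := fun i => by
    simp [evalPDeriv, evalAt, aeval_eq_eval]
  have h' : evalAt v f = eval v f := by simp [evalAt, aeval_eq_eval]
  rw [h']
  simp only [h]
  push_cast at this
  have e : ∑ i, v i * (2 * eval v (pderiv i f)) = 2 * ∑ i, v i * eval v (pderiv i f) := by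
    rw [Finset.mul_sum]
    exact Finset.sum_congr rfl fun i _ => by ring
  linear_combination e + 2 * this

lemma eq_zero_of_tri {f : MvPolynomial (Fin (n + 1)) ℂ} (hf : f.IsHomogeneous 3)
    (h : ∀ v, tri f v v v = 0) : f = 0 := by
  apply MvPolynomial.funext
  intro v
  have := h v
  rw [tri_self hf] at this
  simpa [evalAt, aeval_eq_eval] using this

/-- The space of cubics in terms of the polarizations of its members. -/
lemma mem_SingSpace_iff {S V : Set (Fin (n + 1) → ℂ)} {f : MvPolynomial (Fin (n + 1)) ℂ} :
    f ∈ SingSpace n 3 S V ↔ f.IsHomogeneous 3 ∧ (∀ v ∈ V, tri f v v v = 0) ∧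
      ∀ p ∈ S, ∀ y, tri f p p y = 0 := by
  simp only [SingSpace, Submodule.mem_inf, Submodule.mem_iInf, LinearMap.mem_ker,
    mem_homogeneousSubmodule, and_assoc]
  refine and_congr_right fun hf => and_congr ?_ ?_
  · refine forall₂_congr fun v _ => ?_
    rw [tri_self hf]; simp
  · refine forall₂_congr fun p _ => ⟨fun h y => ?_, fun h i => ?_⟩
    · rw [tri_eq_sum]
      exact Finset.sum_eq_zero fun i _ => by rw [tri_self_single hf, h]; simp
    · have := h (Pi.single i 1)
      rw [tri_self_single hf] at this
      simpa using this

/-- Vanishing of a symmetric trilinear form on the diagonal of a linear space forces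
`T(x, x, y) = 0` there: `T((x+y)³) - T((x-y)³) = 6 T(x, x, y) + 2 T(y, y, y)`. -/
lemma tri_polar2 (f : MvPolynomial (Fin (n + 1)) ℂ) (W : Submodule ℂ (Fin (n + 1) → ℂ))
    (h : ∀ v ∈ W, tri f v v v = 0) {x y : Fin (n + 1) → ℂ} (hx : x ∈ W) (hy : y ∈ W) :
    tri f x x y = 0 := by
  have h1 := h _ (W.add_mem hx hy)
  have h2 := h _ (W.sub_mem hx hy)
  have h3 := h _ hy
  have e1 : tri f x y x = tri f x x y := tri_swap23 ..
  have e2 : tri f y x x = tri f x x y := by rw [tri_swap12, e1]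
  simp only [map_add, map_sub, LinearMap.add_apply, LinearMap.sub_apply, e1, e2, h3] at h1 h2
  linear_combination (h1 - h2) / 6

lemma tri_polar3 (f : MvPolynomial (Fin (n + 1)) ℂ) (W : Submodule ℂ (Fin (n + 1) → ℂ))
    (h : ∀ v ∈ W, tri f v v v = 0) {x y z : Fin (n + 1) → ℂ} (hx : x ∈ W) (hy : y ∈ W)
    (hz : z ∈ W) : tri f x y z = 0 := by
  have h1 := tri_polar2 f W h (W.add_mem hx hy) hz
  have h2 := tri_polar2 f W h hx hz
  have h3 := tri_polar2 f W h hy hz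
  have e1 : tri f y x z = tri f x y z := tri_swap12 ..
  simp only [map_add, LinearMap.add_apply, h2, h3, e1] at h1
  linear_combination h1 / 2

end Polar

/-- The space of cubics in `m` variables has dimension `(m + 2).choose 3`. -/
lemma finrank_cubics (m : ℕ) :
    Module.Finite ℂ (homogeneousSubmodule (Fin m) ℂ 3) ∧
    Module.finrank ℂ (homogeneousSubmodule (Fin m) ℂ 3) = (m + 2).choose 3 := by
  classical
  have hs : {d : Fin m →₀ ℕ | d.degree = 3} = ↑((Finset.univ : Finset (Fin m)).finsuppAntidiag 3) := by
    ext d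
    simp [Finset.mem_finsuppAntidiag, Finsupp.degree_eq_sum]
  rw [homogeneousSubmodule_eq_finsupp_supported, hs]
  let e := AddMonoidAlgebra.supportedEquivFinsupp (R := ℂ) (S := ℂ)
    (↑((Finset.univ : Finset (Fin m)).finsuppAntidiag 3) : Set (Fin m →₀ ℕ))
  refine ⟨Module.Finite.equiv e.symm, ?_⟩
  rw [e.finrank_eq, Module.finrank_finsupp_self]
  simp [Finset.card_finsuppAntidiag_nat_eq_choose]

/-! ### Openness of the absence of a common zero -/

/-- Openness of the condition that a family of linear functionals, depending polynomially on
parameters, has no common zero: it is the nonvanishing of a maximal minor. -/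
lemma exists_minor {ι : Type*} {W : Type*} [AddCommGroup W] [Module ℂ W] [FiniteDimensional ℂ W]
    {I : Type*} (Φ : I → W →ₗ[ℂ] MvPolynomial ι ℂ) (t₀ : ι → ℂ)
    (h : ∀ f, (∀ i, eval t₀ (Φ i f) = 0) → f = 0) :
    ∃ F : MvPolynomial ι ℂ, eval t₀ F ≠ 0 ∧
      ∀ t, eval t F ≠ 0 → ∀ f, (∀ i, eval t (Φ i f) = 0) → f = 0 := by
  classical
  let φ : (ι → ℂ) → I → Module.Dual ℂ W := fun t i => (aeval t).toLinearMap ∘ₗ Φ i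
  have hφ : ∀ t i f, φ t i f = eval t (Φ i f) := fun t i f => by
    simp [φ, aeval_eq_eval]
  obtain ⟨κ, a, -, hspan, hli⟩ := exists_linearIndependent' ℂ (φ t₀)
  have : Finite κ := hli.finite
  have := Fintype.ofFinite κ
  -- the selected functionals still have no common zero
  have hinj : Function.Injective (LinearMap.pi fun k => φ t₀ (a k)) := by
    rw [← LinearMap.ker_eq_bot, LinearMap.ker_eq_bot']
    intro f hf
    refine h f fun i => ?_
    rw [← hφ]
    have hi : φ t₀ i ∈ Submodule.span ℂ (Set.range (φ t₀ ∘ a)) :=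
      hspan ▸ Submodule.subset_span ⟨i, rfl⟩
    have hle : Submodule.span ℂ (Set.range (φ t₀ ∘ a)) ≤
        LinearMap.ker (Module.Dual.eval ℂ W f) := by
      rw [Submodule.span_le]
      rintro _ ⟨k, rfl⟩
      exact congrFun hf k
    exact hle hi
  have h1 : Module.finrank ℂ W ≤ Fintype.card κ := by
    simpa using LinearMap.finrank_le_finrank_of_injective hinj
  have h2 : Fintype.card κ ≤ Module.finrank ℂ W := by
    simpa [Subspace.dual_finrank_eq] using hli.fintype_card_le_finrank
  let b : Module.Basis κ ℂ W :=
    (Module.finBasis ℂ W).reindex (Fintype.equivFinOfCardEq (le_antisymm h2 h1)).symm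
  let M : Matrix κ κ (MvPolynomial ι ℂ) := Matrix.of fun k j => Φ (a k) (b j)
  have hM : ∀ t, eval t M.det = (Matrix.of fun k j => φ t (a k) (b j)).det := fun t => by
    rw [RingHom.map_det]
    congr 1
  have hmul : ∀ t (w : κ → ℂ) k, (Matrix.of fun k j => φ t (a k) (b j)).mulVec w k
      = φ t (a k) (∑ j, w j • b j) := fun t w k => by
    simp [Matrix.mulVec, dotProduct, mul_comm]
  refine ⟨M.det, ?_, fun t ht f hf => ?_⟩
  · rw [hM, ← isUnit_iff_ne_zero, ← Matrix.isUnit_iff_isUnit_det,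
      ← Matrix.mulVec_injective_iff_isUnit]
    intro w w' hw
    have : (∑ j, w j • b j) = ∑ j, w' j • b j := by
      apply hinj
      ext k
      have := congrFun hw k
      rw [hmul, hmul] at this
      exact this
    have h3 := congrArg b.equivFun this
    have h4 : ∀ w : κ → ℂ, b.equivFun (∑ j, w j • b j) = w := fun w => by
      rw [← b.equivFun_symm_apply, LinearEquiv.apply_symm_apply]
    rwa [h4, h4] at h3
  · rw [hM, ← isUnit_iff_ne_zero, ← Matrix.isUnit_iff_isUnit_det,
      ← Matrix.mulVec_injective_iff_isUnit] at ht
    have : b.equivFun f = 0 := by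
      apply ht
      ext k
      rw [hmul, b.sum_equivFun, hφ, hf]
      simp
    simpa using this

/-! ### Identities between quadratic polynomials -/

/-- The scalar identities behind a triple of the first kind: `θ` and `t` are the coefficients of the
pencil of quadratic forms on a triple, `ha`, `hb`, `hc` its values on `v₀` and the triple, and each of
`E1`–`E4` comes from one point of `L`. Evaluation at the three parameters `a`, `b`, `c` of the triple
gives a linear system with only the trivial solution. -/
lemma tripleA_scalar {a b c : ℂ} (ha0 : a ≠ 0) (hb0 : b ≠ 0) (hc0 : c ≠ 0)
    (hab : a ≠ b) (hac : a ≠ c) (hbc : b ≠ c) {θa θb θc tab tac tbc : ℂ} {ha hb hc : ℂ → ℂ}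
    (haa : ha a = 0) (hbb : hb b = 0) (hcc : hc c = 0)
    (E1 : ∀ S, ha S - hb S - tab * (S - a) * (S - b) = 0)
    (E2 : ∀ S, hb S - hc S - tbc * (S - b) * (S - c) = 0)
    (E3 : ∀ S, ha S + hc S + 2 * (θa * S * (S - a) + θc * S * (S - c))
      + tac * (S - a) * (S - c) = 0)
    (E4 : ∀ S, 3 * (θa * S * (S - a) + θb * S * (S - b) + θc * S * (S - c))
      + tab * (S - a) * (S - b) + tac * (S - a) * (S - c) + tbc * (S - b) * (S - c) = 0) :
    (θa = 0 ∧ θb = 0 ∧ θc = 0) ∧ (tab = 0 ∧ tac = 0 ∧ tbc = 0) ∧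
      (ha b = 0 ∧ ha c = 0) ∧ (hb a = 0 ∧ hb c = 0) ∧ (hc a = 0 ∧ hc b = 0) := by
  have ab := sub_ne_zero.2 hab
  have ac := sub_ne_zero.2 hac
  have bc := sub_ne_zero.2 hbc
  have ba := sub_ne_zero.2 hab.symm
  have ca := sub_ne_zero.2 hac.symm
  have cb := sub_ne_zero.2 hbc.symm
  have hba : hb a = 0 := by linear_combination haa - E1 a
  have hab' : ha b = 0 := by linear_combination hbb + E1 b
  have hcb : hc b = 0 := by linear_combination hbb - E2 b
  have hbc' : hb c = 0 := by linear_combination hcc + E2 c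
  have hca : hc a = - tbc * (a - b) * (a - c) := by linear_combination hba - E2 a
  have hac' : ha c = tab * (c - a) * (c - b) := by linear_combination hbc' + E1 c
  -- the values at `a`, `b`, `c` give three linear equations for `θa`, `θb`, `θc`
  have r1 : θa * (b - a) + θc * (b - c) = 0 := by
    have h3 := E3 b
    have h4 := E4 b
    have : b * (θa * (b - a) + θc * (b - c)) = 0 := by linear_combination h4 - h3 + hab' + hcb
    simpa [hb0] using this
  have r2 : 3 * θb * (a - b) + 5 * θc * (a - c) = 0 := by
    have h3 := E3 a
    have h4 := E4 a
    have : a * (3 * θb * (a - b) + 5 * θc * (a - c)) = 0 := by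
      linear_combination h4 + h3 - haa - hca
    simpa [ha0] using this
  have r3 : θa * (c - a) + 3 * θb * (c - b) = 0 := by
    have h3 := E3 c
    have h4 := E4 c
    have : c * (θa * (c - a) + 3 * θb * (c - b)) = 0 := by
      linear_combination h4 - h3 + hac' + hcc
    simpa [hc0] using this
  have hθc : θc = 0 := by
    have : θc * (4 * ((b - c) * (a - c))) = 0 := by
      linear_combination (c - a) * r1 - (b - a) * r3 + (b - c) * r2
    simpa [bc, ac] using this
  have hθa : θa = 0 := by
    rw [hθc] at r1; simpa [ba] using r1
  have hθb : θb = 0 := by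
    rw [hθc] at r2; simpa [ab] using r2
  subst hθa hθb hθc
  have htac : tac = 0 := by
    have := E3 b
    rw [hab', hcb] at this
    simpa [ba, bc] using this
  have htbc : tbc = 0 := by
    have := E4 a
    simpa [ab, ac] using this
  have htab : tab = 0 := by
    have := E4 c
    simpa [ca, cb] using this
  subst htab htbc
  exact ⟨⟨rfl, rfl, rfl⟩, ⟨rfl, htac, rfl⟩, ⟨hab', by simpa using hac'⟩, ⟨hba, hbc'⟩,
    ⟨by simpa using hca, hcb⟩⟩

/-- The analogue of `tripleA_scalar` for a triple of the second kind, which interacts with one more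
basis vector, of parameter `d`; the coefficients `tda`, `tdb`, `tdc` belong to that interaction. -/
lemma tripleB_scalar {a b c d : ℂ} (ha0 : a ≠ 0) (hc0 : c ≠ 0)
    (hab : a ≠ b) (hac : a ≠ c) (hbc : b ≠ c) (had : a ≠ d) (hbd : b ≠ d) (hcd : c ≠ d)
    {θa θb θc tab tac tbc tda tdb tdc : ℂ} {ha hb hc : ℂ → ℂ}
    (haa : ha a = 0) (hbb : hb b = 0) (hcc : hc c = 0)
    (E1 : ∀ S, tab * (S - a) * (S - b) - 2 * tda * (S - d) * (S - a)
      - 2 * tdb * (S - d) * (S - b) = 0)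
    (E2 : ∀ S, 3 * (θb * S * (S - b) + θc * S * (S - c)) + tbc * (S - b) * (S - c)
      + tdb * (S - d) * (S - b) + tdc * (S - d) * (S - c) = 0)
    (E3 : ∀ S, ha S - hb S - tab * (S - a) * (S - b) = 0)
    (E4 : ∀ S, hb S - hc S - tbc * (S - b) * (S - c) = 0)
    (E5 : ∀ S, ha S + hb S + hc S + 3 * (θa * S * (S - a) + θb * S * (S - b) + θc * S * (S - c))
      + tab * (S - a) * (S - b) + tac * (S - a) * (S - c) + tbc * (S - b) * (S - c) = 0) :
    (θa = 0 ∧ θb = 0 ∧ θc = 0) ∧ (tab = 0 ∧ tac = 0 ∧ tbc = 0) ∧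
      (tda = 0 ∧ tdb = 0 ∧ tdc = 0) ∧
      (ha b = 0 ∧ ha c = 0) ∧ (hb a = 0 ∧ hb c = 0) ∧ (hc a = 0 ∧ hc b = 0) := by
  have ab := sub_ne_zero.2 hab
  have ac := sub_ne_zero.2 hac
  have bc := sub_ne_zero.2 hbc
  have ba := sub_ne_zero.2 hab.symm
  have ca := sub_ne_zero.2 hac.symm
  have cb := sub_ne_zero.2 hbc.symm
  have ad := sub_ne_zero.2 had
  have bd := sub_ne_zero.2 hbd
  have cd := sub_ne_zero.2 hcd
  have da := sub_ne_zero.2 had.symm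
  have db := sub_ne_zero.2 hbd.symm
  have dc := sub_ne_zero.2 hcd.symm
  have htdb : tdb = 0 := by
    have := E1 a
    simpa [ad, ab] using this
  have htda : tda = 0 := by
    have := E1 b
    simpa [bd, ba] using this
  have htab : tab = 0 := by
    have := E1 d
    simpa [da, db] using this
  subst htdb htda htab
  have hθb : θb = 0 := by
    have := E2 c
    simpa [hc0, cb] using this
  subst hθb
  have hba : hb a = 0 := by linear_combination haa - E3 a
  have hab' : ha b = 0 := by linear_combination hbb + E3 b
  have hcb : hc b = 0 := by linear_combination hbb - E4 b
  have hbc' : hb c = 0 := by linear_combination hcc + E4 c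
  have hac' : ha c = 0 := by linear_combination hbc' + E3 c
  have hca : hc a = - tbc * (a - b) * (a - c) := by linear_combination hba - E4 a
  have hθc : θc = 0 := by
    have : θc * (a * (a - c)) = 0 := by
      linear_combination (E5 a - haa - hba - hca) / 3
    simpa [ha0, ac] using this
  subst hθc
  have hθa : θa = 0 := by
    have : θa * (c * (c - a)) = 0 := by
      linear_combination (E5 c - hac' - hbc' - hcc) / 3
    simpa [hc0, ca] using this
  subst hθa
  have htbc : tbc = 0 := by
    have := E2 d
    simpa [db, dc] using this
  subst htbc
  have htdc : tdc = 0 := by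
    have := E2 b
    simpa [bd, bc] using this
  have htac : tac = 0 := by
    have := E5 b
    rw [hab', hbb, hcb] at this
    simpa [ba, bc] using this
  exact ⟨⟨rfl, rfl, rfl⟩, ⟨rfl, htac, rfl⟩, ⟨rfl, rfl, htdc⟩, ⟨hab', hac'⟩, ⟨hba, hbc'⟩,
    ⟨by simpa using hca, hcb⟩⟩

/-- If a combination of the four quadratics with one root in `{a, b}` and the other one in
`{d, e}` vanishes, its coefficients are determined up to a common factor. -/
lemma four_quadratics {a b d e : ℂ} (hab : a ≠ b) (had : a ≠ d) (hae : a ≠ e) (hbd : b ≠ d)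
    (hbe : b ≠ e) (hde : d ≠ e) {ad ae bd be : ℂ}
    (E : ∀ S, ad * (S - a) * (S - d) + ae * (S - a) * (S - e) + bd * (S - b) * (S - d)
      + be * (S - b) * (S - e) = 0) :
    ad * (d - a) = be * (e - b) ∧ (be = 0 → ad = 0 ∧ ae = 0 ∧ bd = 0) := by
  have ab := sub_ne_zero.2 hab
  have ba := sub_ne_zero.2 hab.symm
  have da := sub_ne_zero.2 had.symm
  have ad' := sub_ne_zero.2 had
  have ae' := sub_ne_zero.2 hae
  have bd' := sub_ne_zero.2 hbd
  have eb := sub_ne_zero.2 hbe.symm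
  have de := sub_ne_zero.2 hde
  have r1 : bd * (a - d) + be * (a - e) = 0 := by
    have : (a - b) * (bd * (a - d) + be * (a - e)) = 0 := by linear_combination E a
    simpa [ab] using this
  have r2 : ad * (b - d) + ae * (b - e) = 0 := by
    have : (b - a) * (ad * (b - d) + ae * (b - e)) = 0 := by linear_combination E b
    simpa [ba] using this
  have r3 : ae * (d - a) + be * (d - b) = 0 := by
    have : (d - e) * (ae * (d - a) + be * (d - b)) = 0 := by linear_combination E d
    simpa [de] using this
  constructor
  · have : (b - d) * (ad * (d - a) - be * (e - b)) = 0 := by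
      linear_combination (d - a) * r2 - (b - e) * r3
    simpa [bd', sub_eq_zero] using this
  · rintro rfl
    have hae0 : ae = 0 := by simpa [da] using r3
    subst hae0
    exact ⟨by simpa [bd'] using r2, rfl, by simpa [ad'] using r1⟩

/-- The scalar identities behind a pair of triples, with parameters `a`, `b`, `c` and `d`, `e`, `f`.
Each of the three equations determines four of the nine coefficients up to a common factor; these
three factors are related in a cycle, and because of the factors `2` in `E1` going around it gives
`be * (e - b) = 2 * (be * (e - b))`. -/
lemma pair_scalar {a b c d e f : ℂ} (hab : a ≠ b) (hac : a ≠ c) (hbc : b ≠ c)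
    (hde : d ≠ e) (hdf : d ≠ f) (hef : e ≠ f)
    (had : a ≠ d) (hae : a ≠ e) (haf : a ≠ f) (hbd : b ≠ d) (hbe : b ≠ e) (hbf : b ≠ f)
    (hcd : c ≠ d) (hce : c ≠ e) (hcf : c ≠ f) {ad ae af bd be bf cd ce cf : ℂ}
    (E1 : ∀ S, ad * (S - a) * (S - d) + ae * (S - a) * (S - e) + 2 * bd * (S - b) * (S - d)
      + 2 * be * (S - b) * (S - e) = 0)
    (E2 : ∀ S, be * (S - b) * (S - e) + bf * (S - b) * (S - f) + ce * (S - c) * (S - e)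
      + cf * (S - c) * (S - f) = 0)
    (E3 : ∀ S, cf * (S - c) * (S - f) + cd * (S - c) * (S - d) + af * (S - a) * (S - f)
      + ad * (S - a) * (S - d) = 0) :
    (ad = 0 ∧ ae = 0 ∧ af = 0) ∧ (bd = 0 ∧ be = 0 ∧ bf = 0) ∧ (cd = 0 ∧ ce = 0 ∧ cf = 0) := by
  obtain ⟨r1, z1⟩ := four_quadratics hab had hae hbd hbe hde E1
  obtain ⟨r2, z2⟩ := four_quadratics hbc hbe hbf hce hcf hef E2
  obtain ⟨r3, z3⟩ := four_quadratics hac.symm hcf hcd haf had hdf.symm E3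
  have hbe0 : be = 0 := by
    have : be * (e - b) = 0 := by linear_combination - r1 - r2 - r3
    simpa [sub_ne_zero.2 hbe.symm] using this
  subst hbe0
  obtain ⟨had0, hae0, hbd0⟩ := z1 (by simp)
  obtain ⟨hcf0, hcd0, haf0⟩ := z3 had0
  obtain ⟨-, hbf0, hce0⟩ := z2 hcf0
  exact ⟨⟨had0, hae0, haf0⟩, ⟨by simpa using hbd0, rfl, hbf0⟩, ⟨hcd0, hce0, hcf0⟩⟩

/-- A polynomial of degree at most two with three distinct zeros is zero. -/
lemma quad_zero {x y z h₁ h₂ h₃ : ℂ} (hxy : x ≠ y) (hxz : x ≠ z) (hyz : y ≠ z)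
    (hx : x * h₁ + x ^ 2 * h₂ + h₃ = 0) (hy : y * h₁ + y ^ 2 * h₂ + h₃ = 0)
    (hz : z * h₁ + z ^ 2 * h₂ + h₃ = 0) : h₁ = 0 ∧ h₂ = 0 ∧ h₃ = 0 := by
  have xy := sub_ne_zero.2 hxy
  have xz := sub_ne_zero.2 hxz
  have yz := sub_ne_zero.2 hyz
  have h2 : h₂ = 0 := by
    have : (x - y) * ((x - z) * ((y - z) * h₂)) = 0 := by
      linear_combination (y - z) * hx - (x - z) * hy + (x - y) * hz
    simpa [xy, xz, yz] using this
  subst h2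
  have h1 : h₁ = 0 := by
    have : (x - y) * h₁ = 0 := by linear_combination hx - hy
    simpa [xy] using this
  subst h1
  exact ⟨rfl, rfl, by simpa using hx⟩

/-! ### The pencil of quadratic forms along the conic -/

section Core

variable {M : Type*} [AddCommGroup M] [Module ℂ M]

/-- The point `S • ε₀ + S² • ε₁ + ε₂` of a rational curve of degree two. The value
`T (conic ε S) x y` is a polynomial of degree at most two in `S` with coefficients `T (ε a) x y`. -/
def conic (ε : Fin 3 → M) (S : ℂ) : M := S • ε 0 + S ^ 2 • ε 1 + ε 2

/-- The conditions on a symmetric trilinear form `T` that the special configurations share: `L` is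
the linear subspace, `ε` a basis of a complement, and the points are the `ε a` and the
`conic ε (s x) + e x`. The fields `vert` and `point` say that `T` is singular at these points, and
`onL` that it vanishes on `L`; `c` and `m` are `n - 1` further linear conditions, on the linear form
`T (ε 0) (ε 1)`. -/
structure Special {J : Type*} (T : M →ₗ[ℂ] M →ₗ[ℂ] M →ₗ[ℂ] ℂ) (ε : Fin 3 → M)
    (L : Submodule ℂ M) (s : J → ℂ) (e : J → M) : Prop where
  symm12 : ∀ x y z, T x y z = T y x z
  symm23 : ∀ x y z, T x y z = T x z y
  vert : ∀ a y, T (ε a) (ε a) y = 0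
  point : ∀ x y, T (conic ε (s x) + e x) (conic ε (s x) + e x) y = 0
  onL : ∀ x ∈ L, ∀ y ∈ L, ∀ z ∈ L, T x y z = 0
  mem : ∀ x, e x ∈ L
  inj : Function.Injective s
  ne_zero : ∀ x, s x ≠ 0
  c : T (ε 0) (ε 1) (ε 2) = 0
  m : ∀ v ∈ L, T (ε 0) (ε 1) v = 0

namespace Special

variable {J : Type*} {T : M →ₗ[ℂ] M →ₗ[ℂ] M →ₗ[ℂ] ℂ} {ε : Fin 3 → M}
    {L : Submodule ℂ M} {s : J → ℂ} {e : J → M}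

/-- Some of the points may be forgotten. -/
lemma comp {J' : Type*} (h : Special T ε L s e) (g : J' → J) (hg : Function.Injective g) :
    Special T ε L (s ∘ g) (e ∘ g) where
  symm12 := h.symm12
  symm23 := h.symm23
  vert := h.vert
  point x y := h.point (g x) y
  onL := h.onL
  mem _ := h.mem _
  inj := h.inj.comp hg
  ne_zero _ := h.ne_zero _
  c := h.c
  m := h.m

lemma conic_apply (S : ℂ) (x y : M) : T (conic ε S) x y =
    S * T (ε 0) x y + S ^ 2 * T (ε 1) x y + T (ε 2) x y := by
  simp [conic]

lemma conic_swap (h : Special T ε L s e) (S : ℂ) (x y : M) :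
    T (conic ε S) x y = T (conic ε S) y x := h.symm23 _ _ _

lemma conic_conic (h : Special T ε L s e) (S : ℂ) {v : M} (hv : v ∈ L) :
    T (conic ε S) (conic ε S) v = 2 * (S * T (ε 0) (ε 2) v + S ^ 2 * T (ε 1) (ε 2) v) := by
  simp only [conic, map_add, map_smul, LinearMap.add_apply, LinearMap.smul_apply, smul_eq_mul]
  linear_combination S ^ 2 * h.vert 0 v + S ^ 4 * h.vert 1 v + h.vert 2 v +
    2 * S ^ 3 * h.m v hv + S ^ 3 * h.symm12 (ε 1) (ε 0) v + S * h.symm12 (ε 2) (ε 0) v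
    + S ^ 2 * h.symm12 (ε 2) (ε 1) v

/-- Singularity at the point indexed by `x`, in the directions of `L`. -/
lemma conic_point (h : Special T ε L s e) (x : J) {v : M} (hv : v ∈ L) :
    T (conic ε (s x)) (e x) v = -(s x * T (ε 0) (ε 2) v + s x ^ 2 * T (ε 1) (ε 2) v) := by
  have h1 := h.point x v
  have h2 := h.conic_conic (s x) hv
  have h3 := h.onL _ (h.mem x) _ (h.mem x) _ hv
  simp only [map_add, LinearMap.add_apply] at h1
  linear_combination (h1 - h2 - h3 - h.symm12 (e x) (conic ε (s x)) v) / 2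

lemma vert' (h : Special T ε L s e) (a : Fin 3) (b : Fin 3) : T (ε a) (ε b) (ε b) = 0 := by
  rw [h.symm12, h.symm23, h.vert]

lemma diag0 (h : Special T ε L s e) (x : J) :
    T (ε 0) (e x) (e x) = -2 * T (ε 0) (ε 2) (e x) := by
  have h1 := h.point x (ε 0)
  simp only [conic, map_add, map_smul, LinearMap.add_apply, LinearMap.smul_apply,
    smul_eq_mul] at h1
  have p : ∀ a b, T a b (ε 0) = T (ε 0) a b := fun a b => by rw [h.symm23, h.symm12]
  simp only [p, h.vert, h.vert', h.m _ (h.mem x), h.symm23 _ (e x) (ε _),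
    h.symm23 _ (ε 2) (ε 1), h.c] at h1
  linear_combination h1

lemma diag1 (h : Special T ε L s e) (x : J) :
    T (ε 1) (e x) (e x) = -2 * T (ε 1) (ε 2) (e x) := by
  have h1 := h.point x (ε 1)
  simp only [conic, map_add, map_smul, LinearMap.add_apply, LinearMap.smul_apply,
    smul_eq_mul] at h1
  have p : ∀ a b, T a b (ε 1) = T (ε 1) a b := fun a b => by rw [h.symm23, h.symm12]
  have r : T (ε 1) (ε 0) (e x) = 0 := by rw [h.symm12, h.m _ (h.mem x)]
  have r' : T (ε 1) (ε 0) (ε 2) = 0 := by rw [h.symm12, h.c]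
  simp only [p, h.vert, h.vert', r, r', h.symm23 _ (e x) (ε _), h.symm23 _ (ε 2) (ε 0)] at h1
  linear_combination h1

lemma diag2 (h : Special T ε L s e) (x : J) :
    T (ε 2) (e x) (e x) =
      -2 * (s x * T (ε 0) (ε 2) (e x) + s x ^ 2 * T (ε 1) (ε 2) (e x)) := by
  have h1 := h.point x (ε 2)
  simp only [conic, map_add, map_smul, LinearMap.add_apply, LinearMap.smul_apply,
    smul_eq_mul] at h1
  have p : ∀ a b, T a b (ε 2) = T (ε 2) a b := fun a b => by rw [h.symm23, h.symm12]
  have r : T (ε 2) (ε 0) (e x) = T (ε 0) (ε 2) (e x) := h.symm12 _ _ _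
  have r2 : T (ε 2) (ε 1) (e x) = T (ε 1) (ε 2) (e x) := h.symm12 _ _ _
  have r' : T (ε 2) (ε 0) (ε 1) = 0 := by rw [h.symm12, h.symm23, h.c]
  have r'' : T (ε 2) (ε 1) (ε 0) = 0 := by rw [h.symm23, r']
  simp only [p, h.vert, h.vert', r, r', r'', r2, h.symm23 _ (e x) (ε _)] at h1
  linear_combination h1

/-- Singularity at the point indexed by `x`, in the direction of `e x` itself: two of the three
numbers `T (ε a) (ε b) (e x)` that are left determine each other. -/
lemma m_rel (h : Special T ε L s e) (x : J) :
    T (ε 0) (ε 2) (e x) = -(s x * T (ε 1) (ε 2) (e x)) := by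
  have h1 := h.conic_point x (h.mem x)
  rw [conic_apply, h.diag0, h.diag1, h.diag2] at h1
  have : s x * (T (ε 0) (ε 2) (e x) + s x * T (ε 1) (ε 2) (e x)) = 0 := by
    linear_combination - h1 / 3
  have := (mul_eq_zero.1 this).resolve_left (h.ne_zero x)
  linear_combination this

/-- The pencil of quadratic forms on the basis vector `e x`. -/
lemma conic_diag (h : Special T ε L s e) (S : ℂ) (x : J) :
    T (conic ε S) (e x) (e x) = 2 * (-T (ε 1) (ε 2) (e x) * S * (S - s x)) := by
  rw [conic_apply, h.diag0, h.diag1, h.diag2, h.m_rel]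
  ring

/-- The coefficient of `(S - s x) * (S - s y)` in `T (conic ε S) (e x) (e y)`. -/
noncomputable def coef (T : M →ₗ[ℂ] M →ₗ[ℂ] M →ₗ[ℂ] ℂ) (ε : Fin 3 → M) (s : J → ℂ) (e : J → M)
    (x y : J) : ℂ :=
  T (ε 2) (e x) (e y) / (s x * s y)

/-- Singularity at the points indexed by `x` and `y` gives the values of the left side, a quadratic
polynomial in `S`, at `s x` and `s y`. One coefficient is left free, `coef`. -/
lemma conic_offdiag (h : Special T ε L s e) (S : ℂ) {x y : J} (hxy : x ≠ y) :
    T (conic ε S) (e x) (e y) = -T (ε 1) (ε 2) (e x) * S * (S - s x)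
      + -T (ε 1) (ε 2) (e y) * S * (S - s y) + coef T ε s e x y * (S - s x) * (S - s y) := by
  have h1 := h.conic_point x (h.mem y)
  have h2 := h.conic_point y (h.mem x)
  rw [h.symm23] at h2
  rw [h.m_rel] at h1 h2
  rw [conic_apply] at h1 h2 ⊢
  have hs : coef T ε s e x y * (s x * s y) = T (ε 2) (e x) (e y) := by
    rw [coef, div_mul_cancel₀ _ (mul_ne_zero (h.ne_zero x) (h.ne_zero y))]
  have z := quad_zero (x := s x) (y := s y) (z := 0)
    (h₁ := T (ε 0) (e x) (e y) - (T (ε 1) (ε 2) (e x) * s x + T (ε 1) (ε 2) (e y) * s y -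
      coef T ε s e x y * (s x + s y)))
    (h₂ := T (ε 1) (e x) (e y) - (- T (ε 1) (ε 2) (e x) - T (ε 1) (ε 2) (e y) +
      coef T ε s e x y)) (h₃ := T (ε 2) (e x) (e y) - coef T ε s e x y * (s x * s y))
    (h.inj.ne hxy) (h.ne_zero x) (h.ne_zero y)
    (by linear_combination h1) (by linear_combination h2) (by linear_combination - hs)
  linear_combination S * z.1 + S ^ 2 * z.2.1 + z.2.2

lemma conic_ortho (h : Special T ε L s e) {v : M} (hv : v ∈ L) (h0 : T (ε 0) (ε 2) v = 0)
    (h1 : T (ε 1) (ε 2) v = 0) (x : J) : T (conic ε (s x)) v (e x) = 0 := by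
  rw [h.symm23, h.conic_point x hv, h0, h1]; ring

/-- `T (conic ε S) v w` is a polynomial of degree at most two in `S`: it is zero once it vanishes
for three parameters. -/
lemma conic_zero_of_three (h : Special T ε L s e) {a b c : J} (hab : a ≠ b) (hac : a ≠ c)
    (hbc : b ≠ c) {v w : M} (h1 : T (conic ε (s a)) v w = 0) (h2 : T (conic ε (s b)) v w = 0)
    (h3 : T (conic ε (s c)) v w = 0) (S : ℂ) : T (conic ε S) v w = 0 := by
  rw [conic_apply] at h1 h2 h3 ⊢
  have z := quad_zero (h.inj.ne hab) (h.inj.ne hac) (h.inj.ne hbc) h1 h2 h3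
  linear_combination S * z.1 + S ^ 2 * z.2.1 + z.2.2

/-- The pencil of quadratic forms `T (conic ε S)` pairs the triple `e a`, `e b`, `e c` to zero with
itself and with the vector `v₀`. The vanishing on `e x` alone is recorded through the coefficient
`T (ε 1) (ε 2) (e x)`, see `Special.conic_diag`. -/
def TripleZero (T : M →ₗ[ℂ] M →ₗ[ℂ] M →ₗ[ℂ] ℂ) (ε : Fin 3 → M) (e : J → M) (v₀ : M)
    (a b c : J) : Prop :=
  (T (ε 1) (ε 2) (e a) = 0 ∧ T (ε 1) (ε 2) (e b) = 0 ∧ T (ε 1) (ε 2) (e c) = 0) ∧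
  (∀ S, T (conic ε S) (e a) (e b) = 0 ∧ T (conic ε S) (e a) (e c) = 0 ∧
    T (conic ε S) (e b) (e c) = 0) ∧
  (∀ S, T (conic ε S) v₀ (e a) = 0 ∧ T (conic ε S) v₀ (e b) = 0 ∧ T (conic ε S) v₀ (e c) = 0)

/-- A triple of the first kind, with its four points of `L`. -/
lemma tripleA (h : Special T ε L s e) {v₀ : M} (hv : v₀ ∈ L) (h0 : T (ε 0) (ε 2) v₀ = 0)
    (h1 : T (ε 1) (ε 2) v₀ = 0) {a b c : J} (hab : a ≠ b) (hac : a ≠ c) (hbc : b ≠ c)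
    (l0 : ∀ S, T (conic ε S) v₀ v₀ = 0)
    (l1 : ∀ S, T (conic ε S) (v₀ + e a - e b) (v₀ + e a - e b) = 0)
    (l2 : ∀ S, T (conic ε S) (v₀ + e b - e c) (v₀ + e b - e c) = 0)
    (l3 : ∀ S, T (conic ε S) (v₀ + e a + e c) (v₀ + e a + e c) = 0)
    (l4 : ∀ S, T (conic ε S) (e a + e b + e c) (e a + e b + e c) = 0) :
    TripleZero T ε e v₀ a b c := by
  have sw := h.conic_swap
  have da := fun S => h.conic_diag S a
  have db := fun S => h.conic_diag S b
  have dc := fun S => h.conic_diag S c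
  have oab := fun S => h.conic_offdiag S hab
  have oac := fun S => h.conic_offdiag S hac
  have obc := fun S => h.conic_offdiag S hbc
  have haa := h.conic_ortho hv h0 h1 a
  have hbb := h.conic_ortho hv h0 h1 b
  have hcc := h.conic_ortho hv h0 h1 c
  simp only [map_add, map_sub, LinearMap.add_apply, LinearMap.sub_apply] at l1 l2 l3 l4
  obtain ⟨⟨ta, tb, tc⟩, ⟨tab, tac, tbc⟩, ⟨ab, ac⟩, ⟨ba, bc⟩, ⟨ca, cb⟩⟩ :=
    tripleA_scalar (θa := -T (ε 1) (ε 2) (e a)) (θb := -T (ε 1) (ε 2) (e b))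
      (θc := -T (ε 1) (ε 2) (e c)) (tab := coef T ε s e a b) (tac := coef T ε s e a c)
      (tbc := coef T ε s e b c)
      (ha := fun S => T (conic ε S) v₀ (e a)) (hb := fun S => T (conic ε S) v₀ (e b))
      (hc := fun S => T (conic ε S) v₀ (e c))
      (h.ne_zero a) (h.ne_zero b) (h.ne_zero c) (h.inj.ne hab) (h.inj.ne hac) (h.inj.ne hbc)
      haa hbb hcc
      (fun S => by
        linear_combination (l1 S - l0 S - sw S (e a) v₀ + sw S (e b) v₀ + sw S (e b) (e a)
          - da S - db S) / 2 + oab S)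
      (fun S => by
        linear_combination (l2 S - l0 S - sw S (e b) v₀ + sw S (e c) v₀ + sw S (e c) (e b)
          - db S - dc S) / 2 + obc S)
      (fun S => by
        linear_combination (l3 S - l0 S - sw S (e a) v₀ - sw S (e c) v₀ - sw S (e c) (e a)
          - da S - dc S) / 2 - oac S)
      (fun S => by
        linear_combination (l4 S - sw S (e b) (e a) - sw S (e c) (e a) - sw S (e c) (e b)
          - da S - db S - dc S) / 2 - oab S - oac S - obc S)
  rw [neg_eq_zero] at ta tb tc
  refine ⟨⟨ta, tb, tc⟩, fun S => ⟨?_, ?_, ?_⟩, fun S => ⟨?_, ?_, ?_⟩⟩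
  · rw [oab, ta, tb, tab]; ring
  · rw [oac, ta, tc, tac]; ring
  · rw [obc, tb, tc, tbc]; ring
  · exact h.conic_zero_of_three hab hac hbc haa ab ac S
  · exact h.conic_zero_of_three hab hac hbc ba hbb bc S
  · exact h.conic_zero_of_three hab hac hbc ca cb hcc S

/-- A triple of the second kind, with its five points of `L`; the extra vertex is `d`. -/
lemma tripleB (h : Special T ε L s e) {v₀ : M} (hv : v₀ ∈ L) (h0 : T (ε 0) (ε 2) v₀ = 0)
    (h1 : T (ε 1) (ε 2) v₀ = 0) {a b c d : J} (hab : a ≠ b) (hac : a ≠ c) (hbc : b ≠ c)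
    (hda : d ≠ a) (hdb : d ≠ b) (hdc : d ≠ c) (hd : T (ε 1) (ε 2) (e d) = 0)
    (l0 : ∀ S, T (conic ε S) v₀ v₀ = 0)
    (l1 : ∀ S, T (conic ε S) ((-2 : ℂ) • e d + e a + e b) ((-2 : ℂ) • e d + e a + e b) = 0)
    (l2 : ∀ S, T (conic ε S) (e d + e b + e c) (e d + e b + e c) = 0)
    (l3 : ∀ S, T (conic ε S) (v₀ + e a - e b) (v₀ + e a - e b) = 0)
    (l4 : ∀ S, T (conic ε S) (v₀ + e b - e c) (v₀ + e b - e c) = 0)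
    (l5 : ∀ S, T (conic ε S) (v₀ + e a + e b + e c) (v₀ + e a + e b + e c) = 0) :
    TripleZero T ε e v₀ a b c ∧ ∀ S, T (conic ε S) (e d) (e a) = 0 ∧
      T (conic ε S) (e d) (e b) = 0 ∧ T (conic ε S) (e d) (e c) = 0 := by
  have sw := h.conic_swap
  have da := fun S => h.conic_diag S a
  have db := fun S => h.conic_diag S b
  have dc := fun S => h.conic_diag S c
  have dd := fun S => h.conic_diag S d
  have oab := fun S => h.conic_offdiag S hab
  have oac := fun S => h.conic_offdiag S hac
  have obc := fun S => h.conic_offdiag S hbc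
  have oda := fun S => h.conic_offdiag S hda
  have odb := fun S => h.conic_offdiag S hdb
  have odc := fun S => h.conic_offdiag S hdc
  have haa := h.conic_ortho hv h0 h1 a
  have hbb := h.conic_ortho hv h0 h1 b
  have hcc := h.conic_ortho hv h0 h1 c
  simp only [hd] at dd oda odb odc
  simp only [map_add, map_sub, map_smul, LinearMap.add_apply, LinearMap.sub_apply,
    LinearMap.smul_apply, smul_eq_mul] at l1 l2 l3 l4 l5
  obtain ⟨⟨ta, tb, tc⟩, ⟨tab, tac, tbc⟩, ⟨tda, tdb, tdc⟩, ⟨ab, ac⟩, ⟨ba, bc⟩, ⟨ca, cb⟩⟩ :=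
    tripleB_scalar (θa := -T (ε 1) (ε 2) (e a)) (θb := -T (ε 1) (ε 2) (e b))
      (θc := -T (ε 1) (ε 2) (e c)) (tab := coef T ε s e a b) (tac := coef T ε s e a c)
      (tbc := coef T ε s e b c) (tda := coef T ε s e d a) (tdb := coef T ε s e d b)
      (tdc := coef T ε s e d c)
      (ha := fun S => T (conic ε S) v₀ (e a)) (hb := fun S => T (conic ε S) v₀ (e b))
      (hc := fun S => T (conic ε S) v₀ (e c))
      (h.ne_zero a) (h.ne_zero c) (h.inj.ne hab) (h.inj.ne hac) (h.inj.ne hbc)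
      (h.inj.ne hda.symm) (h.inj.ne hdb.symm) (h.inj.ne hdc.symm)
      haa hbb hcc
      (fun S => by
        linear_combination (l1 S - sw S (e b) (e a) + 2 * sw S (e a) (e d) + 2 * sw S (e b) (e d)
          - da S - db S - 4 * dd S) / 2 - oab S + 2 * oda S + 2 * odb S)
      (fun S => by
        linear_combination (l2 S - sw S (e c) (e b) - sw S (e b) (e d) - sw S (e c) (e d)
          - db S - dc S - dd S) / 2 - obc S - odb S - odc S)
      (fun S => by
        linear_combination (l3 S - l0 S - sw S (e a) v₀ + sw S (e b) v₀ + sw S (e b) (e a)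
          - da S - db S) / 2 + oab S)
      (fun S => by
        linear_combination (l4 S - l0 S - sw S (e b) v₀ + sw S (e c) v₀ + sw S (e c) (e b)
          - db S - dc S) / 2 + obc S)
      (fun S => by
        linear_combination (l5 S - l0 S - sw S (e a) v₀ - sw S (e b) v₀ - sw S (e c) v₀
          - sw S (e b) (e a) - sw S (e c) (e a) - sw S (e c) (e b)
          - da S - db S - dc S) / 2 - oab S - oac S - obc S)
  rw [neg_eq_zero] at ta tb tc
  refine ⟨⟨⟨ta, tb, tc⟩, fun S => ⟨?_, ?_, ?_⟩, fun S => ⟨?_, ?_, ?_⟩⟩, fun S => ⟨?_, ?_, ?_⟩⟩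
  · rw [oab, ta, tb, tab]; ring
  · rw [oac, ta, tc, tac]; ring
  · rw [obc, tb, tc, tbc]; ring
  · exact h.conic_zero_of_three hab hac hbc haa ab ac S
  · exact h.conic_zero_of_three hab hac hbc ba hbb bc S
  · exact h.conic_zero_of_three hab hac hbc ca cb hcc S
  · rw [oda, ta, tda]; ring
  · rw [odb, tb, tdb]; ring
  · rw [odc, tc, tdc]; ring

end Special

end Core

/-! ### Points on triples and pairs of triples -/

section Config

variable {M : Type*} [AddCommGroup M] [Module ℂ M] {r : ℕ}

/-- Three points attached to each pair of triples `k < i`. -/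
def pairPts (e : Fin r × Fin 3 → M) (q : (Σ i : Fin r, Fin i) × Fin 3) : M :=
  let i := q.1.1
  let k : Fin r := ⟨q.1.2, q.1.2.2.trans q.1.1.2⟩
  ![e (i, 0) + (2 : ℂ) • e (i, 1) + e (k, 0) + e (k, 1),
    e (i, 1) + e (i, 2) + e (k, 1) + e (k, 2),
    e (i, 2) + e (i, 0) + e (k, 2) + e (k, 0)] q.2

/-- The points of the linear subspace in the special configuration for `n = 3 * r + 3`: `v`, four
points for each triple and three for each pair of triples. -/
def ptsA (v : M) (e : Fin r × Fin 3 → M) :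
    Unit ⊕ (Fin r × Fin 4) ⊕ ((Σ i : Fin r, Fin i) × Fin 3) → M :=
  Sum.elim (fun _ => v) <| Sum.elim
    (fun q => ![v + e (q.1, 0) - e (q.1, 1), v + e (q.1, 1) - e (q.1, 2),
      v + e (q.1, 0) + e (q.1, 2), e (q.1, 0) + e (q.1, 1) + e (q.1, 2)] q.2)
    (pairPts e)

/-- The points of the linear subspace in the special configuration for `n = 3 * r + 4`. The vector
`e none` lies in no triple; there are two points involving only `v` and `e none`, five points for each
triple and three for each pair of triples. -/
def ptsB (v : M) (e : Option (Fin r × Fin 3) → M) :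
    Fin 2 ⊕ (Fin r × Fin 5) ⊕ ((Σ i : Fin r, Fin i) × Fin 3) → M :=
  Sum.elim (fun q => ![v, v + e none] q) <| Sum.elim
    (fun q => ![(-2 : ℂ) • e none + e (some (q.1, 0)) + e (some (q.1, 1)),
      e none + e (some (q.1, 1)) + e (some (q.1, 2)),
      v + e (some (q.1, 0)) - e (some (q.1, 1)), v + e (some (q.1, 1)) - e (some (q.1, 2)),
      v + e (some (q.1, 0)) + e (some (q.1, 1)) + e (some (q.1, 2))] q.2)
    (pairPts (e ∘ some))

namespace Special

variable {J : Type*} {T : M →ₗ[ℂ] M →ₗ[ℂ] M →ₗ[ℂ] ℂ} {ε : Fin 3 → M}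
    {L : Submodule ℂ M}

/-- Two triples on which the form is zero, with the three points attached to the pair. -/
lemma pair_zero {s : J → ℂ} {e : J → M} (h : Special T ε L s e) {x : Fin 3 → J} {y : Fin 3 → J}
    (hx : Function.Injective x) (hy : Function.Injective y) (hxy : ∀ i j, x i ≠ y j)
    (hθ : ∀ i, T (ε 1) (ε 2) (e i) = 0)
    (hxx : ∀ i j S, T (conic ε S) (e (x i)) (e (x j)) = 0)
    (hyy : ∀ i j S, T (conic ε S) (e (y i)) (e (y j)) = 0)
    (l1 : ∀ S, T (conic ε S) (e (x 0) + (2 : ℂ) • e (x 1) + e (y 0) + e (y 1))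
      (e (x 0) + (2 : ℂ) • e (x 1) + e (y 0) + e (y 1)) = 0)
    (l2 : ∀ S, T (conic ε S) (e (x 1) + e (x 2) + e (y 1) + e (y 2))
      (e (x 1) + e (x 2) + e (y 1) + e (y 2)) = 0)
    (l3 : ∀ S, T (conic ε S) (e (x 2) + e (x 0) + e (y 2) + e (y 0))
      (e (x 2) + e (x 0) + e (y 2) + e (y 0)) = 0) (i j : Fin 3) (S : ℂ) :
    T (conic ε S) (e (x i)) (e (y j)) = 0 := by
  have sw := h.conic_swap
  have o : ∀ i j S, T (conic ε S) (e (x i)) (e (y j)) =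
      coef T ε s e (x i) (y j) * (S - s (x i)) * (S - s (y j)) := fun i j S => by
    rw [h.conic_offdiag S (hxy i j), hθ, hθ]; ring
  have nx : ∀ {i j}, i ≠ j → s (x i) ≠ s (x j) := fun hij => h.inj.ne (hx.ne hij)
  have ny : ∀ {i j}, i ≠ j → s (y i) ≠ s (y j) := fun hij => h.inj.ne (hy.ne hij)
  have nxy : ∀ i j, s (x i) ≠ s (y j) := fun i j => h.inj.ne (hxy i j)
  simp only [map_add, map_smul, LinearMap.add_apply, LinearMap.smul_apply, smul_eq_mul,
    hxx, hyy, sw _ (e (y _)) (e (x _)), o] at l1 l2 l3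
  obtain ⟨⟨c00, c01, c02⟩, ⟨c10, c11, c12⟩, c20, c21, c22⟩ :=
    pair_scalar (nx (i := 0) (j := 1) (by decide)) (nx (i := 0) (j := 2) (by decide))
      (nx (i := 1) (j := 2) (by decide)) (ny (i := 0) (j := 1) (by decide))
      (ny (i := 0) (j := 2) (by decide)) (ny (i := 1) (j := 2) (by decide))
      (nxy 0 0) (nxy 0 1) (nxy 0 2) (nxy 1 0) (nxy 1 1) (nxy 1 2) (nxy 2 0) (nxy 2 1) (nxy 2 2)
      (ad := coef T ε s e (x 0) (y 0)) (ae := coef T ε s e (x 0) (y 1))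
      (af := coef T ε s e (x 0) (y 2)) (bd := coef T ε s e (x 1) (y 0))
      (be := coef T ε s e (x 1) (y 1)) (bf := coef T ε s e (x 1) (y 2))
      (cd := coef T ε s e (x 2) (y 0)) (ce := coef T ε s e (x 2) (y 1))
      (cf := coef T ε s e (x 2) (y 2))
      (fun S => by linear_combination l1 S / 2) (fun S => by linear_combination l2 S / 2)
      (fun S => by linear_combination l3 S / 2)
  have hc : coef T ε s e (x i) (y j) = 0 := by
    fin_cases i <;> fin_cases j <;> assumption
  rw [o, hc]; ring

/-- Vanishing on all the triples, propagated to all pairs of triples. -/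
lemma all_pairs {s : Fin r × Fin 3 → ℂ} {e : Fin r × Fin 3 → M} (h : Special T ε L s e)
    (hθ : ∀ i, T (ε 1) (ε 2) (e i) = 0)
    (hin : ∀ i j j' S, T (conic ε S) (e (i, j)) (e (i, j')) = 0)
    (hl : ∀ q S, T (conic ε S) (pairPts e q) (pairPts e q) = 0) (x y : Fin r × Fin 3) (S : ℂ) :
    T (conic ε S) (e x) (e y) = 0 := by
  have main : ∀ i k : Fin r, k < i → ∀ j j' S, T (conic ε S) (e (i, j)) (e (k, j')) = 0 := by
    intro i k hk
    exact h.pair_zero (x := fun j => (i, j)) (y := fun j => (k, j))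
      (fun _ _ h => (Prod.ext_iff.1 h).2) (fun _ _ h => (Prod.ext_iff.1 h).2)
      (fun _ _ h => hk.ne' (Prod.ext_iff.1 h).1) hθ (hin i) (hin k)
      (hl (⟨i, ⟨k, hk⟩⟩, 0)) (hl (⟨i, ⟨k, hk⟩⟩, 1)) (hl (⟨i, ⟨k, hk⟩⟩, 2))
  obtain ⟨i, j⟩ := x
  obtain ⟨k, j'⟩ := y
  rcases lt_trichotomy i k with hik | rfl | hik
  · rw [h.conic_swap]; exact main _ _ hik _ _ _
  · exact hin _ _ _ _
  · exact main _ _ hik _ _ _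

/-- The information of `TripleZero` for all triples, without the case distinction inside a triple. -/
lemma triple_in {s : Fin r × Fin 3 → ℂ} {e : Fin r × Fin 3 → M} (h : Special T ε L s e) {v₀ : M}
    (ht : ∀ i, TripleZero T ε e v₀ (i, 0) (i, 1) (i, 2)) :
    (∀ x, T (ε 1) (ε 2) (e x) = 0) ∧ (∀ i j j' S, T (conic ε S) (e (i, j)) (e (i, j')) = 0) ∧
      ∀ x S, T (conic ε S) v₀ (e x) = 0 := by
  have hθ : ∀ x, T (ε 1) (ε 2) (e x) = 0 := by
    rintro ⟨i, j⟩
    obtain ⟨⟨h1, h2, h3⟩, -, -⟩ := ht i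
    fin_cases j <;> assumption
  refine ⟨hθ, ?_, ?_⟩
  · intro i j j' S
    obtain ⟨-, h1, -⟩ := ht i
    obtain ⟨h1, h2, h3⟩ := h1 S
    have hd : ∀ x, T (conic ε S) (e x) (e x) = 0 := fun x => by
      rw [h.conic_diag, hθ]; ring
    have h1' := h1
    have h2' := h2
    have h3' := h3
    rw [h.conic_swap] at h1' h2' h3'
    fin_cases j <;> fin_cases j' <;> first | assumption | exact hd _
  · rintro ⟨i, j⟩ S
    obtain ⟨-, -, h1⟩ := ht i
    obtain ⟨h1, h2, h3⟩ := h1 S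
    fin_cases j <;> assumption

/-- If the pencil of quadratic forms cut out by the conic is zero, then so is `T`. -/
lemma eq_zero {s : J → ℂ} {e : J → M} (h : Special T ε L s e) {v₀ : M} (hv : v₀ ∈ L)
    (hspan : Submodule.span ℂ (Set.range ε ∪ insert v₀ (Set.range e)) = ⊤)
    (h0 : T (ε 0) (ε 2) v₀ = 0) (h1 : T (ε 1) (ε 2) v₀ = 0)
    (l0 : ∀ S, T (conic ε S) v₀ v₀ = 0) (hθ : ∀ x, T (ε 1) (ε 2) (e x) = 0)
    (hve : ∀ x S, T (conic ε S) v₀ (e x) = 0)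
    (hee : ∀ x y S, T (conic ε S) (e x) (e y) = 0) : T = 0 := by
  set B := insert v₀ (Set.range e) with hB
  have hBL : ∀ x ∈ B, x ∈ L := by
    rintro x (rfl | ⟨x, rfl⟩)
    exacts [hv, h.mem x]
  have c2 : ∀ S, ∀ x ∈ B, ∀ y ∈ B, T (conic ε S) x y = 0 := by
    rintro S x (rfl | ⟨x, rfl⟩) y (rfl | ⟨y, rfl⟩)
    · exact l0 S
    · exact hve y S
    · rw [h.conic_swap]; exact hve x S
    · exact hee x y S
  have E2 : ∀ a, ∀ x ∈ B, ∀ y ∈ B, T (ε a) x y = 0 := by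
    intro a x hx y hy
    have k := fun S => c2 S x hx y hy
    simp only [conic_apply] at k
    have z := quad_zero (x := 0) (y := 1) (z := -1) (by norm_num) (by norm_num) (by norm_num)
      (k 0) (k 1) (k (-1))
    fin_cases a
    exacts [z.1, z.2.1, z.2.2]
  have E12 : ∀ x ∈ B, T (ε 1) (ε 2) x = 0 := by
    rintro x (rfl | ⟨x, rfl⟩)
    exacts [h1, hθ x]
  have E02 : ∀ x ∈ B, T (ε 0) (ε 2) x = 0 := by
    rintro x (rfl | ⟨x, rfl⟩)
    · exact h0
    · rw [h.m_rel, hθ]; ring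
  have E1 : ∀ a b, ∀ x ∈ B, T (ε a) (ε b) x = 0 := by
    intro a b x hx
    have h01 := h.m x (hBL x hx)
    have h02 := E02 x hx
    have h12 := E12 x hx
    have h10 := h01
    have h20 := h02
    have h21 := h12
    rw [h.symm12] at h10 h20 h21
    fin_cases a <;> fin_cases b <;> first | assumption | exact h.vert _ _
  have E0 : ∀ a b c, T (ε a) (ε b) (ε c) = 0 := by
    intro a b c
    rcases eq_or_ne a b with rfl | hab
    · exact h.vert _ _
    rcases eq_or_ne b c with rfl | hbc
    · exact h.vert' _ _
    rcases eq_or_ne a c with rfl | hac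
    · rw [h.symm23]; exact h.vert _ _
    have k1 := h.c
    have k2 := k1
    rw [h.symm12] at k2
    have k3 := k1
    rw [h.symm23] at k3
    have k4 := k2
    rw [h.symm23] at k4
    have k5 := k3
    rw [h.symm12] at k5
    have k6 := k5
    rw [h.symm23] at k6
    fin_cases a <;> fin_cases b <;> fin_cases c <;>
      first | assumption | exact absurd rfl hab | exact absurd rfl hac | exact absurd rfl hbc
  refine LinearMap.ext_on hspan fun x hx => LinearMap.ext_on hspan fun y hy =>
    LinearMap.ext_on hspan fun z hz => ?_
  simp only [LinearMap.zero_apply]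
  rcases hx with ⟨a, rfl⟩ | hx <;> rcases hy with ⟨b, rfl⟩ | hy <;> rcases hz with ⟨c, rfl⟩ | hz
  · exact E0 a b c
  · exact E1 a b z hz
  · rw [h.symm23]; exact E1 a c y hy
  · exact E2 a y hy z hz
  · rw [h.symm12, h.symm23]; exact E1 b c x hx
  · rw [h.symm12]; exact E2 b x hx z hz
  · rw [h.symm23, h.symm12]; exact E2 c x hx y hy
  · exact h.onL x (hBL x hx) y (hBL y hy) z (hBL z hz)

/-- The core of the proof for `n = 3 * r + 3`: at the special configuration, `T` is zero if it
satisfies the `n + 1` extra conditions `h.c`, `h.m`, `h0` and `h1`. -/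
theorem caseA {s : Fin r × Fin 3 → ℂ} {e : Fin r × Fin 3 → M} (h : Special T ε L s e) {v₀ : M}
    (hv : v₀ ∈ L) (hspan : Submodule.span ℂ (Set.range ε ∪ insert v₀ (Set.range e)) = ⊤)
    (h0 : T (ε 0) (ε 2) v₀ = 0) (h1 : T (ε 1) (ε 2) v₀ = 0)
    (hl : ∀ i y, T (ptsA v₀ e i) (ptsA v₀ e i) y = 0) : T = 0 := by
  have hl' : ∀ i S, T (conic ε S) (ptsA v₀ e i) (ptsA v₀ e i) = 0 := fun i S => by
    rw [h.symm12, h.symm23, hl]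
  have l0 := hl' (Sum.inl ())
  have ht : ∀ i, TripleZero T ε e v₀ (i, 0) (i, 1) (i, 2) := fun i =>
    h.tripleA hv h0 h1 (by simp) (by simp) (by simp) l0 (hl' (Sum.inr (Sum.inl (i, 0))))
      (hl' (Sum.inr (Sum.inl (i, 1)))) (hl' (Sum.inr (Sum.inl (i, 2))))
      (hl' (Sum.inr (Sum.inl (i, 3))))
  obtain ⟨hθ, hin, hve⟩ := h.triple_in ht
  exact h.eq_zero hv hspan h0 h1 l0 hθ hve
    (h.all_pairs hθ hin fun q S => hl' (Sum.inr (Sum.inr q)) S)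

/-- The core of the proof for `n = 3 * r + 4`: as in `caseA`, except that one of the extra
conditions concerns `e none`; the corresponding vanishing for `v₀` follows from the first two points. -/
theorem caseB {s : Option (Fin r × Fin 3) → ℂ} {e : Option (Fin r × Fin 3) → M}
    (h : Special T ε L s e) {v₀ : M} (hv : v₀ ∈ L)
    (hspan : Submodule.span ℂ (Set.range ε ∪ insert v₀ (Set.range e)) = ⊤)
    (hd0 : T (ε 0) (ε 2) (e none) = 0) (h1 : T (ε 1) (ε 2) v₀ = 0)
    (hl : ∀ i y, T (ptsB v₀ e i) (ptsB v₀ e i) y = 0) : T = 0 := by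
  have hl' : ∀ i S, T (conic ε S) (ptsB v₀ e i) (ptsB v₀ e i) = 0 := fun i S => by
    rw [h.symm12, h.symm23, hl]
  have l0 : ∀ S, T (conic ε S) v₀ v₀ = 0 := hl' (Sum.inl 0)
  have l1 : ∀ S, T (conic ε S) (v₀ + e none) (v₀ + e none) = 0 := hl' (Sum.inl 1)
  simp only [map_add, LinearMap.add_apply] at l1
  have hs := h.ne_zero none
  have hd1 : T (ε 1) (ε 2) (e none) = 0 := by
    have := h.m_rel none
    rw [hd0, zero_eq_neg] at this
    exact (mul_eq_zero.1 this).resolve_left hs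
  have hdd : ∀ S, T (conic ε S) (e none) (e none) = 0 := fun S => by
    rw [h.conic_diag, hd1]; ring
  have hvd : ∀ S, T (conic ε S) v₀ (e none) = 0 := fun S => by
    linear_combination (l1 S - l0 S - hdd S - h.conic_swap S (e none) v₀) / 2
  have h0 : T (ε 0) (ε 2) v₀ = 0 := by
    have := h.conic_point none hv
    rw [h.conic_swap, hvd, h1] at this
    have : s none * T (ε 0) (ε 2) v₀ = 0 := by linear_combination this
    exact (mul_eq_zero.1 this).resolve_left hs
  have hB : ∀ i, _ := fun i =>
    h.tripleB hv h0 h1 (a := some (i, 0)) (b := some (i, 1)) (c := some (i, 2)) (d := none)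
      (by simp) (by simp) (by simp) (by simp) (by simp) (by simp) hd1 l0
      (hl' (Sum.inr (Sum.inl (i, 0)))) (hl' (Sum.inr (Sum.inl (i, 1))))
      (hl' (Sum.inr (Sum.inl (i, 2)))) (hl' (Sum.inr (Sum.inl (i, 3))))
      (hl' (Sum.inr (Sum.inl (i, 4))))
  have h' := h.comp some (Option.some_injective _)
  obtain ⟨hθ, hin, hve⟩ := h'.triple_in (v₀ := v₀) fun i => (hB i).1
  have hp := h'.all_pairs hθ hin fun q S => hl' (Sum.inr (Sum.inr q)) S
  have hde : ∀ x S, T (conic ε S) (e none) (e (some x)) = 0 := by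
    rintro ⟨i, j⟩ S
    obtain ⟨h1, h2, h3⟩ := (hB i).2 S
    fin_cases j <;> assumption
  refine h.eq_zero hv hspan h0 h1 l0 ?_ ?_ ?_
  · rintro (_ | x)
    exacts [hd1, hθ x]
  · rintro (_ | x) S
    exacts [hvd S, hve x S]
  · rintro (_ | x) (_ | y) S
    · exact hdd S
    · exact hde y S
    · rw [h.conic_swap]; exact hde x S
    · exact hp x y S

end Special

end Config

/-! ### Existence of rigid configurations -/

/-- The map `f ↦ tri f a b c`. -/
noncomputable def triLin {n : ℕ} (a b c : Fin (n + 1) → ℂ) :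
    MvPolynomial (Fin (n + 1)) ℂ →ₗ[ℂ] ℂ where
  toFun f := tri f a b c
  map_add' f g := by simp [tri_apply, Finset.sum_add_distrib, add_mul]
  map_smul' r f := by simp [tri_apply, Finset.mul_sum, mul_assoc]

@[simp] lemma triLin_apply {n : ℕ} (a b c : Fin (n + 1) → ℂ) (f : MvPolynomial (Fin (n + 1)) ℂ) :
    triLin a b c f = tri f a b c := rfl

/-- At the configuration `A, u, p`, the cubics are determined by `n + 1` linear functionals: `n - 1`
coordinates of the linear form `tri f (p k) (p k')` and two arbitrary functionals `ψ₁` and `ψ₂`. The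
projections of `p k` and `p k'` to the two omitted coordinates `i₁` and `i₂` are linearly independent.
Injectivity of `A` is included. -/
def Rigid {n N : ℕ} (A : Matrix (Fin (n + 1)) (Fin (n - 2)) ℂ) (u : Fin N → Fin (n - 2) → ℂ)
    (p : Fin n → Fin (n + 1) → ℂ) (k : Fin n) : Prop :=
  ∃ (k' : Fin n) (i₁ i₂ : Fin (n + 1)) (ψ₁ ψ₂ : MvPolynomial (Fin (n + 1)) ℂ →ₗ[ℂ] ℂ),
    i₁ ≠ i₂ ∧ p k i₁ * p k' i₂ - p k i₂ * p k' i₁ ≠ 0 ∧ Function.Injective A.mulVec ∧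
    ∀ f ∈ SingSpace n 3 (Set.range (fun s => A.mulVec (u s)) ∪ Set.range p)
      (Set.range A.mulVec),
      (∀ i, i ≠ i₁ → i ≠ i₂ → tri f (p k) (p k') (Pi.single i 1) = 0) →
      ψ₁ f = 0 → ψ₂ f = 0 → f = 0

/-- A combinatorial configuration of points in a linear space with basis indexed by `Option J`,
turned into a matrix, coordinate vectors and ambient points: the complement is spanned by three
coordinate vectors, the first of which becomes `p k`, and the parameters on the conic are
`1, …, n - 3`. The index `none` stands for the vector `v₀`. -/
lemma exists_special_aux {J I : Type} [Fintype J] [Fintype I] {n N : ℕ}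
    (hJ : Fintype.card J + 3 = n) (hI : Fintype.card I = N) (k : Fin n) (P : I → Option J → ℂ)
    (w : Option J)
    (core : ∀ (T : (Fin (n + 1) → ℂ) →ₗ[ℂ] (Fin (n + 1) → ℂ) →ₗ[ℂ] (Fin (n + 1) → ℂ) →ₗ[ℂ] ℂ)
      (ε : Fin 3 → Fin (n + 1) → ℂ) (L : Submodule ℂ (Fin (n + 1) → ℂ)) (s : J → ℂ)
      (E : Option J → Fin (n + 1) → ℂ), Special T ε L s (E ∘ some) → E none ∈ L →
      Submodule.span ℂ (Set.range ε ∪ insert (E none) (Set.range (E ∘ some))) = ⊤ →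
      T (ε 0) (ε 2) (E w) = 0 → T (ε 1) (ε 2) (E none) = 0 →
      (∀ i y, T (Fintype.linearCombination ℂ E (P i))
        (Fintype.linearCombination ℂ E (P i)) y = 0) →
      T = 0) :
    ∃ (A : Matrix (Fin (n + 1)) (Fin (n - 2)) ℂ) (u : Fin N → Fin (n - 2) → ℂ)
      (p : Fin n → Fin (n + 1) → ℂ), Rigid A u p k := by
  classical
  obtain ⟨σ⟩ : Nonempty (Fin 3 ⊕ Option J ≃ Fin (n + 1)) :=
    ⟨Fintype.equivFinOfCardEq (by simp; omega)⟩
  obtain ⟨τ⟩ : Nonempty (Option J ≃ Fin (n - 2)) :=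
    ⟨Fintype.equivFinOfCardEq (by simp; omega)⟩
  obtain ⟨ι⟩ : Nonempty (I ≃ Fin N) := ⟨Fintype.equivFinOfCardEq hI⟩
  obtain ⟨κ, hκ⟩ : ∃ κ : Fin 3 ⊕ J ≃ Fin n, κ (Sum.inl 0) = k := by
    obtain ⟨κ⟩ : Nonempty (Fin 3 ⊕ J ≃ Fin n) :=
      ⟨Fintype.equivFinOfCardEq (by simp; omega)⟩
    exact ⟨κ.trans (Equiv.swap (κ (Sum.inl 0)) k), by simp⟩
  obtain ⟨s, hs, hs0⟩ : ∃ s : J → ℂ, Function.Injective s ∧ ∀ x, s x ≠ 0 := by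
    refine ⟨fun x => ((Fintype.equivFin J x : ℕ) : ℂ) + 1, fun x y h => ?_, fun x => ?_⟩
    · have h' : ((Fintype.equivFin J x : ℕ) : ℂ) = (Fintype.equivFin J y : ℕ) := by
        simpa using h
      exact (Fintype.equivFin J).injective (Fin.ext (by exact_mod_cast h'))
    · exact Nat.cast_add_one_ne_zero _
  let ε : Fin 3 → Fin (n + 1) → ℂ := fun a => Pi.single (σ (Sum.inl a)) 1
  let E : Option J → Fin (n + 1) → ℂ := fun o => Pi.single (σ (Sum.inr o)) 1
  let A : Matrix (Fin (n + 1)) (Fin (n - 2)) ℂ := Matrix.of fun i j => E (τ.symm j) i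
  have hA : ∀ v, A.mulVec v = Fintype.linearCombination ℂ E (v ∘ τ) := by
    intro v
    ext i
    simp only [Fintype.linearCombination_apply, Finset.sum_apply, Pi.smul_apply, smul_eq_mul,
      Matrix.mulVec, dotProduct]
    refine Fintype.sum_equiv τ.symm _ _ fun j => ?_
    simp [A, mul_comm]
  have hEl : ∀ v a, Fintype.linearCombination ℂ E v (σ (Sum.inl a)) = 0 := by
    intro v a
    simp [Fintype.linearCombination_apply, E]
  have hEr : ∀ v o, Fintype.linearCombination ℂ E v (σ (Sum.inr o)) = v o := by
    intro v o
    simp [Fintype.linearCombination_apply, E, Pi.single_apply]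
  let p : Fin n → Fin (n + 1) → ℂ := fun j =>
    Sum.elim ε (fun x => conic ε (s x) + E (some x)) (κ.symm j)
  have hpk : p k = ε 0 := by simp [p, ← hκ]
  have hpk' : p (κ (Sum.inl 1)) = ε 1 := by simp [p]
  have hσ : σ (Sum.inl 0) ≠ σ (Sum.inl 1) := by simp
  refine ⟨A, fun i j => P (ι.symm i) (τ.symm j), p, κ (Sum.inl 1), σ (Sum.inl 0), σ (Sum.inl 1),
    triLin (ε 1) (ε 2) (E none), triLin (ε 0) (ε 2) (E w), hσ, ?_, ?_, ?_⟩
  · rw [hpk, hpk']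
    simp [ε]
  · intro v v' h
    rw [hA, hA] at h
    funext j
    have := congrFun h (σ (Sum.inr (τ.symm j)))
    simpa [hEr] using this
  · intro f hf hi h1 h2
    rw [triLin_apply] at h1 h2
    rw [hpk, hpk'] at hi
    obtain ⟨hf3, hfL, hfS⟩ := mem_SingSpace_iff.1 hf
    have hL : ∀ v ∈ LinearMap.range A.mulVecLin, tri f v v v = 0 := by
      rintro _ ⟨v, rfl⟩
      exact hfL _ ⟨v, rfl⟩
    have hE : ∀ o, E o ∈ LinearMap.range A.mulVecLin := by
      intro o
      refine ⟨Pi.single (τ o) 1, ?_⟩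
      ext i
      simp [A]
    have hT : tri f = 0 := by
      refine core (tri f) ε (LinearMap.range A.mulVecLin) s E ?_ (hE _) ?_ h2 h1 ?_
      · refine ⟨tri_swap12 f, tri_swap23 f, ?_, ?_, ?_, fun _ => hE _, hs, hs0, ?_, ?_⟩
        · intro a y
          have := hfS (p (κ (Sum.inl a))) (Or.inr ⟨_, rfl⟩) y
          simpa [p] using this
        · intro x y
          have := hfS (p (κ (Sum.inr x))) (Or.inr ⟨_, rfl⟩) y
          simpa [p] using this
        · exact fun x hx y hy z hz => tri_polar3 f _ hL hx hy hz
        · exact hi (σ (Sum.inl 2)) (by simp) (by simp)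
        · rintro _ ⟨v, rfl⟩
          rw [Matrix.mulVecLin_apply, hA, tri_eq_sum]
          refine Finset.sum_eq_zero fun i _ => ?_
          by_cases h0 : i = σ (Sum.inl 0)
          · rw [h0, hEl, zero_mul]
          by_cases h1 : i = σ (Sum.inl 1)
          · rw [h1, hEl, zero_mul]
          rw [hi i h0 h1, mul_zero]
      · refine top_le_iff.1 ?_
        rw [← (Pi.basisFun ℂ (Fin (n + 1))).span_eq]
        refine Submodule.span_mono ?_
        rintro _ ⟨i, rfl⟩
        rw [Pi.basisFun_apply]
        obtain ⟨a, rfl⟩ := σ.surjective i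
        rcases a with a | _ | x
        · exact Or.inl ⟨a, rfl⟩
        · exact Or.inr (Or.inl rfl)
        · exact Or.inr (Or.inr ⟨x, rfl⟩)
      · intro i y
        have := hfS (A.mulVec fun j => P (ι.symm (ι i)) (τ.symm j)) (Or.inl ⟨ι i, rfl⟩) y
        rw [hA] at this
        simpa [Function.comp_def] using this
    exact eq_zero_of_tri hf3 fun v => by simp [hT]

lemma sum_fin_val (r : ℕ) : 2 * ∑ i : Fin r, (i : ℕ) + r = r * r := by
  rw [Fin.sum_univ_eq_sum_range (fun i => i)]
  induction r with
  | zero => rfl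
  | succ r ih =>
    rw [Finset.sum_range_succ]
    linarith [(by ring : (r + 1) * (r + 1) = r * r + 2 * r + 1)]

lemma map_pairPts {M M' : Type*} [AddCommGroup M] [Module ℂ M] [AddCommGroup M'] [Module ℂ M']
    {r : ℕ} (φ : M →ₗ[ℂ] M') (e : Fin r × Fin 3 → M) (q) :
    φ (pairPts e q) = pairPts (φ ∘ e) q := by
  obtain ⟨q, j⟩ := q
  fin_cases j <;> simp [pairPts]

lemma map_ptsA {M M' : Type*} [AddCommGroup M] [Module ℂ M] [AddCommGroup M'] [Module ℂ M']
    {r : ℕ} (φ : M →ₗ[ℂ] M') (v : M) (e : Fin r × Fin 3 → M) (q) :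
    φ (ptsA v e q) = ptsA (φ v) (φ ∘ e) q := by
  rcases q with q | ⟨q, j⟩ | q
  · rfl
  · fin_cases j <;> simp [ptsA]
  · exact map_pairPts φ e q

lemma map_ptsB {M M' : Type*} [AddCommGroup M] [Module ℂ M] [AddCommGroup M'] [Module ℂ M']
    {r : ℕ} (φ : M →ₗ[ℂ] M') (v : M) (e : Option (Fin r × Fin 3) → M) (q) :
    φ (ptsB v e q) = ptsB (φ v) (φ ∘ e) q := by
  rcases q with j | ⟨q, j⟩ | q
  · fin_cases j <;> simp [ptsB]
  · fin_cases j <;> simp [ptsB]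
  · exact map_pairPts φ (e ∘ some) q

/-- For each `k` there is a rigid configuration. Both residues of `n` modulo `3` produce exactly
`n * (n - 1) / 6` points on the linear subspace. -/
lemma exists_special {n : ℕ} (hn : 6 ≤ n) (h3 : n % 3 ≠ 2) (k : Fin n) :
    ∃ (A : Matrix (Fin (n + 1)) (Fin (n - 2)) ℂ) (u : Fin (n * (n - 1) / 6) → Fin (n - 2) → ℂ)
      (p : Fin n → Fin (n + 1) → ℂ), Rigid A u p k := by
  classical
  have hmod : n % 3 = 0 ∨ n % 3 = 1 := by omega
  rcases hmod with hmod | hmod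
  · obtain ⟨r, rfl⟩ : ∃ r, n = 3 * r + 3 := ⟨n / 3 - 1, by omega⟩
    refine exists_special_aux (J := Fin r × Fin 3)
      (I := Unit ⊕ (Fin r × Fin 4) ⊕ ((Σ i : Fin r, Fin i) × Fin 3)) (by simp; omega) ?_ k
      (ptsA (Pi.single none 1) fun x => Pi.single (some x) 1) none ?_
    · have := sum_fin_val r
      simp only [Fintype.card_sum, Fintype.card_unit, Fintype.card_prod, Fintype.card_fin,
        Fintype.card_sigma]
      generalize ∑ i : Fin r, (i : ℕ) = t at *
      rw [Nat.add_sub_cancel_right (n := 3 * r + 2) (m := 1)]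
      symm
      apply Nat.div_eq_of_eq_mul_left (by norm_num)
      linarith
    · intro T ε L s E h hv hspan h0 h1 hl
      refine h.caseA hv hspan h0 h1 fun i y => ?_
      have := hl i y
      rw [map_ptsA] at this
      simpa [Function.comp_def] using this
  · obtain ⟨r, rfl⟩ : ∃ r, n = 3 * r + 4 := ⟨n / 3 - 1, by omega⟩
    refine exists_special_aux (J := Option (Fin r × Fin 3))
      (I := Fin 2 ⊕ (Fin r × Fin 5) ⊕ ((Σ i : Fin r, Fin i) × Fin 3)) (by simp; omega) ?_ k
      (ptsB (Pi.single none 1) fun x => Pi.single (some x) 1) (some none) ?_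
    · have := sum_fin_val r
      simp only [Fintype.card_sum, Fintype.card_prod, Fintype.card_fin,
        Fintype.card_sigma]
      generalize ∑ i : Fin r, (i : ℕ) = t at *
      rw [Nat.add_sub_cancel_right (n := 3 * r + 3) (m := 1)]
      symm
      apply Nat.div_eq_of_eq_mul_left (by norm_num)
      linarith
    · intro T ε L s E h hv hspan h0 h1 hl
      refine h.caseB hv hspan h0 h1 fun i y => ?_
      have := hl i y
      rw [map_ptsB] at this
      simpa [Function.comp_def] using this

/-! ### Openness of rigidity and the parameter count -/

/-- The polarization of `f` at vectors whose entries are polynomials in the parameters. -/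
noncomputable def triPoly {n : ℕ} {ι : Type*} (a b c : Fin (n + 1) → MvPolynomial ι ℂ) :
    MvPolynomial (Fin (n + 1)) ℂ →ₗ[ℂ] MvPolynomial ι ℂ :=
  ∑ i, ∑ j, ∑ k, (tau i j k).smulRight (a i * (b j * c k))

lemma eval_triPoly {n : ℕ} {ι : Type*} (a b c : Fin (n + 1) → MvPolynomial ι ℂ) (t : ι → ℂ)
    (f : MvPolynomial (Fin (n + 1)) ℂ) : eval t (triPoly a b c f) =
      tri f (fun i => eval t (a i)) (fun i => eval t (b i)) (fun i => eval t (c i)) := by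
  simp [triPoly, tri_apply, smul_eval, LinearMap.sum_apply]

/-- Rigidity is an open condition on the parameters. -/
lemma Rigid.generic {n N : ℕ} {A : Matrix (Fin (n + 1)) (Fin (n - 2)) ℂ}
    {u : Fin N → Fin (n - 2) → ℂ} {p : Fin n → Fin (n + 1) → ℂ} {k : Fin n} (h : Rigid A u p k) :
    ∃ F : MvPolynomial ((Fin (n + 1) × Fin (n - 2)) ⊕ (Fin N × Fin (n - 2)) ⊕
      (Fin n × Fin (n + 1))) ℂ, F ≠ 0 ∧ ∀ t, eval t F ≠ 0 →
        Rigid (Matrix.of fun i j => t (Sum.inl (i, j)))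
          (fun s j => t (Sum.inr (Sum.inl (s, j)))) (fun k i => t (Sum.inr (Sum.inr (k, i)))) k := by
  classical
  obtain ⟨k₁, i₁, i₂, ψ₁, ψ₂, hi, hminor, hA, hf⟩ := h
  set t₀ : (Fin (n + 1) × Fin (n - 2)) ⊕ (Fin N × Fin (n - 2)) ⊕ (Fin n × Fin (n + 1)) → ℂ :=
    Sum.elim (fun q => A q.1 q.2) (Sum.elim (fun q => u q.1 q.2) fun q => p q.1 q.2) with ht₀
  have := (finrank_cubics (n + 1)).1
  let ι := (Fin (n + 1) × Fin (n - 2)) ⊕ (Fin N × Fin (n - 2)) ⊕ (Fin n × Fin (n + 1))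
  let pa : (Fin (n - 2) → ℂ) → Fin (n + 1) → MvPolynomial ι ℂ := fun w i =>
    ∑ j, X (Sum.inl (i, j)) * C (w j)
  let pl : Fin N → Fin (n + 1) → MvPolynomial ι ℂ := fun s i =>
    ∑ j, X (Sum.inl (i, j)) * X (Sum.inr (Sum.inl (s, j)))
  let pp : Fin n → Fin (n + 1) → MvPolynomial ι ℂ := fun k i => X (Sum.inr (Sum.inr (k, i)))
  let pe : Fin (n + 1) → Fin (n + 1) → MvPolynomial ι ℂ := fun i j =>
    C (Pi.single (M := fun _ => ℂ) i 1 j)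
  let cst : (MvPolynomial (Fin (n + 1)) ℂ →ₗ[ℂ] ℂ) →
    MvPolynomial (Fin (n + 1)) ℂ →ₗ[ℂ] MvPolynomial ι ℂ := fun ψ => ψ.smulRight 1
  let Φ : (Fin (n - 2) → ℂ) ⊕ (Fin N × Fin (n + 1)) ⊕ (Fin n × Fin (n + 1)) ⊕ Fin (n + 1) →
      MvPolynomial (Fin (n + 1)) ℂ →ₗ[ℂ] MvPolynomial ι ℂ :=
    Sum.elim (fun w => triPoly (pa w) (pa w) (pa w)) <|
      Sum.elim (fun q => triPoly (pl q.1) (pl q.1) (pe q.2)) <|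
      Sum.elim (fun q => triPoly (pp q.1) (pp q.1) (pe q.2)) fun i =>
        if i = i₁ then cst ψ₁ else if i = i₂ then cst ψ₂ else
          triPoly (pp k) (pp k₁) (pe i)
  -- the functionals `Φ` cut out exactly the cubics occurring in the rigidity condition
  have key : ∀ t f, f.IsHomogeneous 3 → ((∀ i, eval t (Φ i f) = 0) ↔
      f ∈ SingSpace n 3 (Set.range (fun s => (Matrix.of fun i j => t (Sum.inl (i, j))).mulVec
          (fun j => t (Sum.inr (Sum.inl (s, j))))) ∪
          Set.range fun k i => t (Sum.inr (Sum.inr (k, i))))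
        (Set.range (Matrix.of fun i j => t (Sum.inl (i, j))).mulVec) ∧
      (∀ i, i ≠ i₁ → i ≠ i₂ → tri f (fun i => t (Sum.inr (Sum.inr (k, i))))
        (fun i => t (Sum.inr (Sum.inr (k₁, i)))) (Pi.single i 1) = 0) ∧ ψ₁ f = 0 ∧ ψ₂ f = 0) := by
    intro t f hf3
    have e1 : ∀ w, (fun i => eval t (pa w i)) =
        (Matrix.of fun i j => t (Sum.inl (i, j))).mulVec w := by
      intro w; ext i; simp [pa, Matrix.mulVec, dotProduct]
    have e2 : ∀ s, (fun i => eval t (pl s i)) = (Matrix.of fun i j => t (Sum.inl (i, j))).mulVec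
          (fun j => t (Sum.inr (Sum.inl (s, j)))) := by
      intro w; ext i; simp [pl, Matrix.mulVec, dotProduct]
    have e3 : ∀ k, (fun i => eval t (pp k i)) = fun i => t (Sum.inr (Sum.inr (k, i))) := by
      intro k; ext i; simp [pp]
    have e4 : ∀ i, (fun j => eval t (pe i j)) = Pi.single i 1 := by
      intro k; ext i; simp [pe]
    have e5 : ∀ ψ, eval t (cst ψ f) = ψ f := by
      intro ψ; simp [cst, smul_eval]
    have hy : ∀ a b : Fin (n + 1) → ℂ, (∀ i, tri f a b (Pi.single i 1) = 0) ↔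
        ∀ y, tri f a b y = 0 := fun a b => by
      refine ⟨fun h y => ?_, fun h i => h _⟩
      rw [tri_eq_sum]
      simp [h]
    rw [mem_SingSpace_iff]
    simp only [Sum.forall, Prod.forall, Φ, Sum.elim_inl, Sum.elim_inr, eval_triPoly, e1, e2, e3, e4,
      hy, Set.mem_union, or_imp, forall_and, Set.forall_mem_range, hf3, true_and, and_assoc]
    refine and_congr_right fun _ => and_congr_right fun _ => and_congr_right fun _ => ?_
    constructor
    · intro h
      refine ⟨fun i h1 h2 => ?_, ?_, ?_⟩
      · simpa only [if_neg h1, if_neg h2, eval_triPoly, e3, e4] using h i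
      · simpa only [if_true, e5] using h i₁
      · simpa only [if_neg hi.symm, if_true, e5] using h i₂
    · rintro ⟨h1, h2, h3⟩ i
      by_cases hi1 : i = i₁
      · rw [if_pos hi1, e5, h2]
      by_cases hi2 : i = i₂
      · rw [if_neg hi1, if_pos hi2, e5, h3]
      simpa only [if_neg hi1, if_neg hi2, eval_triPoly, e3, e4] using h1 i hi1 hi2
  have hA0 : (Matrix.of fun i j => t₀ (Sum.inl (i, j))) = A := by ext; simp [t₀]
  obtain ⟨F₁, hF₁, h₁⟩ := exists_minor
    (fun i => Φ i ∘ₗ (homogeneousSubmodule (Fin (n + 1)) ℂ 3).subtype) t₀ (by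
      rintro ⟨f, hf3⟩ h0
      have := (key t₀ f hf3).1 h0
      rw [hA0] at this
      exact Subtype.ext (hf f this.1 this.2.1 this.2.2.1 this.2.2.2))
  obtain ⟨F₂, hF₂, h₂⟩ := exists_minor (W := Fin (n - 2) → ℂ)
    (fun i : Fin (n + 1) => ∑ j, (LinearMap.proj (φ := fun _ => ℂ) j).smulRight
      (X (Sum.inl (i, j)) : MvPolynomial ι ℂ)) t₀ (by
      intro w hw
      apply hA
      ext i
      simpa [Matrix.mulVec, dotProduct, t₀, smul_eval, mul_comm] using hw i)
  refine ⟨F₁ * F₂ * (pp k i₁ * pp k₁ i₂ - pp k i₂ * pp k₁ i₁), ?_, ?_⟩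
  · intro h0
    have := congrArg (eval t₀) h0
    simp only [map_mul, map_zero, mul_eq_zero, hF₁, hF₂, false_or] at this
    exact hminor (by simpa [pp, t₀] using this)
  · intro t ht
    simp only [map_mul, mul_ne_zero_iff] at ht
    refine ⟨k₁, i₁, i₂, ψ₁, ψ₂, hi, by simpa [pp] using ht.2, ?_, ?_⟩
    · rw [← Matrix.coe_mulVecLin, ← LinearMap.ker_eq_bot, LinearMap.ker_eq_bot']
      intro w hw
      refine h₂ t ht.1.2 w fun i => ?_
      simpa [Matrix.mulVec, dotProduct, smul_eval, mul_comm] using congrFun hw i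
    · intro f hf h1 h2 h3
      have hf3 := (mem_SingSpace_iff.1 hf).1
      exact congrArg Subtype.val (h₁ t ht.1.1 ⟨f, hf3⟩ ((key t f hf3).2 ⟨hf, h1, h2, h3⟩))

/-- The parameter count: all cubics, minus the cubics on the linear subspace, minus three conditions
for each point on it and `n + 1` for each of the `n` other points, leave `n + 1`. -/
lemma choose_count {n : ℕ} (h3 : n % 3 ≠ 2) :
    (n + 3).choose 3 = n.choose 3 + n * (n - 1) / 6 * 3 + n * (n + 1) + (n + 1) := by
  have h6 : 6 * (n * (n - 1) / 6) = n * (n - 1) := by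
    refine Nat.mul_div_cancel' ?_
    have h2 : 2 ∣ n * (n - 1) := (Nat.even_mul_pred_self n).two_dvd
    have h3' : 3 ∣ n * (n - 1) := by
      have : n % 3 = 0 ∨ n % 3 = 1 := by omega
      rcases this with h | h
      · exact Dvd.dvd.mul_right (Nat.dvd_of_mod_eq_zero h) _
      · exact Dvd.dvd.mul_left ((Nat.modEq_iff_dvd' (by omega)).1 (show 1 % 3 = n % 3 by omega)) _
    exact Nat.Coprime.mul_dvd_of_dvd_of_dvd (by norm_num) h2 h3'
  have hc : 2 * n.choose 2 = n * (n - 1) := by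
    rw [Nat.choose_two_right, Nat.mul_div_cancel' (Nat.even_mul_pred_self n).two_dvd]
  have hn : n * (n + 1) = n * (n - 1) + 2 * n := by
    cases n with
    | zero => rfl
    | succ m => simp; ring
  have : (n + 3).choose 3 = n.choose 3 + 3 * n.choose 2 + 3 * n + 1 := by
    simp [Nat.choose_succ_succ' (n + 2) 2, Nat.choose_succ_succ' (n + 1) 2,
      Nat.choose_succ_succ' n 2, Nat.choose_succ_succ' (n + 1) 1, Nat.choose_succ_succ' n 1]
    ring
  generalize n * (n - 1) / 6 = N at *
  omega

/-- The expected dimension is a lower bound: the cubics are the kernel of a linear map to a space of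
dimension `(n + 3).choose 3 - (n + 1)`. At a point of the linear subspace only the three derivatives in
the directions of a complement give conditions. -/
lemma le_finrank {n : ℕ} (hn : 6 ≤ n) (h3 : n % 3 ≠ 2)
    {A : Matrix (Fin (n + 1)) (Fin (n - 2)) ℂ} (hA : Function.Injective A.mulVec)
    (u : Fin (n * (n - 1) / 6) → Fin (n - 2) → ℂ) (p : Fin n → Fin (n + 1) → ℂ) :
    n + 1 ≤ Module.finrank ℂ (SingSpace n 3
      (Set.range (fun s => A.mulVec (u s)) ∪ Set.range p) (Set.range A.mulVec)) := by
  classical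
  have fin1 := (finrank_cubics (n + 1)).1
  have fin2 := (finrank_cubics (n - 2)).1
  obtain ⟨Wc, hWc⟩ := Submodule.exists_isCompl (LinearMap.range A.mulVecLin)
  have hr : Module.finrank ℂ (LinearMap.range A.mulVecLin) = n - 2 := by
    rw [LinearMap.finrank_range_of_inj hA]; simp
  have hW3 : Module.finrank ℂ Wc = 3 := by
    have := Submodule.finrank_add_eq_of_isCompl hWc
    rw [hr] at this
    simp at this
    omega
  let b := Module.finBasisOfFinrankEq ℂ Wc hW3
  -- restriction of cubics to the linear subspace
  let sub : MvPolynomial (Fin (n + 1)) ℂ →ₗ[ℂ] MvPolynomial (Fin (n - 2)) ℂ :=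
    (aeval fun i => ∑ j, C (A i j) * X j).toLinearMap
  have hsub : ∀ f w, eval w (sub f) = eval (A.mulVec w) f := by
    intro f w
    simp only [sub, AlgHom.toLinearMap_apply]
    rw [← aeval_eq_eval, ← AlgHom.comp_apply, comp_aeval, aeval_eq_eval]
    congr 2
    ext i
    simp [Matrix.mulVec, dotProduct]
  have hsub3 : ∀ f ∈ homogeneousSubmodule (Fin (n + 1)) ℂ 3,
      sub f ∈ homogeneousSubmodule (Fin (n - 2)) ℂ 3 := by
    intro f hf
    have := IsHomogeneous.aeval (n := 1) (m := 3) hf (fun i => ∑ j, C (A i j) * X j) fun i =>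
      IsHomogeneous.sum _ _ _ fun j _ => by
        simpa using (isHomogeneous_C _ (A i j)).mul (isHomogeneous_X ℂ j)
    exact this
  let Θ : homogeneousSubmodule (Fin (n + 1)) ℂ 3 →ₗ[ℂ] homogeneousSubmodule (Fin (n - 2)) ℂ 3 ×
      ((Fin (n * (n - 1) / 6) × Fin 3 → ℂ) × (Fin n × Fin (n + 1) → ℂ)) :=
    (sub.restrict hsub3).prod
      (((LinearMap.pi fun q => triLin (A.mulVec (u q.1)) (A.mulVec (u q.1)) (b q.2)).prod
        (LinearMap.pi fun q => triLin (p q.1) (p q.1) (Pi.single q.2 1))) ∘ₗ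
          (homogeneousSubmodule (Fin (n + 1)) ℂ 3).subtype)
  have hker : (LinearMap.ker Θ).map (homogeneousSubmodule (Fin (n + 1)) ℂ 3).subtype ≤
      SingSpace n 3 (Set.range (fun s => A.mulVec (u s)) ∪ Set.range p) (Set.range A.mulVec) := by
    rintro _ ⟨⟨f, hf3⟩, hf, rfl⟩
    rw [SetLike.mem_coe, LinearMap.mem_ker] at hf
    have h1 : sub f = 0 := congrArg (fun z => (z.1 : MvPolynomial (Fin (n - 2)) ℂ)) hf
    have h2 : ∀ i j, tri f (A.mulVec (u i)) (A.mulVec (u i)) (b j) = 0 := fun i j =>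
      congrFun (congrArg (fun z => z.2.1) hf) (i, j)
    have h3 : ∀ k i, tri f (p k) (p k) (Pi.single i 1) = 0 := fun i j =>
      congrFun (congrArg (fun z => z.2.2) hf) (i, j)
    have h1' : ∀ v ∈ LinearMap.range A.mulVecLin, tri f v v v = 0 := by
      rintro _ ⟨w, rfl⟩
      rw [tri_self hf3, evalAt, AlgHom.toLinearMap_apply, aeval_eq_eval, Matrix.mulVecLin_apply,
        ← hsub, h1]
      simp
    refine mem_SingSpace_iff.2 ⟨hf3, ?_, ?_⟩
    · rintro _ ⟨w, rfl⟩
      exact h1' _ ⟨w, rfl⟩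
    · rintro _ (⟨i, rfl⟩ | ⟨k, rfl⟩) y
      · obtain ⟨y₁, hy₁, y₂, hy₂, rfl⟩ := Submodule.mem_sup.1
          (hWc.sup_eq_top ▸ Submodule.mem_top : y ∈ LinearMap.range A.mulVecLin ⊔ Wc)
        have z : tri f (A.mulVec (u i)) (A.mulVec (u i)) y₁ = 0 :=
          tri_polar2 f _ h1' ⟨u i, rfl⟩ hy₁
        change tri f (A.mulVec (u i)) (A.mulVec (u i)) (y₁ + y₂) = 0
        rw [map_add, z, zero_add]
        have e : y₂ = ∑ j, b.repr ⟨y₂, hy₂⟩ j • (b j : Fin (n + 1) → ℂ) := by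
          have := congrArg Wc.subtype (b.sum_repr ⟨y₂, hy₂⟩)
          rw [map_sum] at this
          exact this.symm
        rw [e, map_sum]
        simp [h2]
      · change tri f (p k) (p k) y = 0
        rw [tri_eq_sum]
        simp [h3]
  have hV : SingSpace n 3 (Set.range (fun s => A.mulVec (u s)) ∪ Set.range p)
      (Set.range A.mulVec) ≤ homogeneousSubmodule (Fin (n + 1)) ℂ 3 :=
    inf_le_left.trans inf_le_left
  have := Submodule.finiteDimensional_of_le hV
  have hd := LinearMap.finrank_range_add_finrank_ker Θ
  have hle := Submodule.finrank_mono hker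
  rw [Submodule.finrank_map_subtype_eq] at hle
  have hrange := Submodule.finrank_le (LinearMap.range Θ)
  simp only [Module.finrank_prod, Module.finrank_fintype_fun_eq_card, Fintype.card_prod,
    Fintype.card_fin, (finrank_cubics _).2] at hd hrange
  have hcount := choose_count h3
  rw [show n - 2 + 2 = n by omega] at hrange
  rw [show n + 1 + 2 = n + 3 by omega] at hd
  omega

/-! ### Dimension and isolated singular points -/

section Rigid

variable {n N : ℕ} {A : Matrix (Fin (n + 1)) (Fin (n - 2)) ℂ} {u : Fin N → Fin (n - 2) → ℂ}
  {p : Fin n → Fin (n + 1) → ℂ} {k : Fin n}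

lemma singSpace_finite (S V : Set (Fin (n + 1) → ℂ)) : FiniteDimensional ℂ (SingSpace n 3 S V) :=
  have := (finrank_cubics (n + 1)).1
  Submodule.finiteDimensional_of_le
    (inf_le_left.trans inf_le_left : SingSpace n 3 S V ≤ homogeneousSubmodule (Fin (n + 1)) ℂ 3)

/-- At a rigid configuration the space of cubics has at most the expected dimension. If it has the
expected one, then the `n + 1` functionals of rigidity form a basis of its dual; as the values of
`tri f (p k) (p k')` in `n - 1` coordinates are then arbitrary, the common kernel of the Hessians at
`p k` is spanned by `p k`. -/
lemma Rigid.finrank_le (h : Rigid A u p k) :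
    let V := SingSpace n 3 (Set.range (fun s => A.mulVec (u s)) ∪ Set.range p) (Set.range A.mulVec)
    Module.finrank ℂ V ≤ n + 1 ∧ p k ≠ 0 ∧ (2 ≤ n → Module.finrank ℂ V = n + 1 → ∀ q,
      (∀ f ∈ V, ∀ y, tri f (p k) q y = 0) → ∃ c : ℂ, q = c • p k) := by
  classical
  intro V
  obtain ⟨k', i₁, i₂, ψ₁, ψ₂, hi, hD, hA, hf⟩ := h
  have := singSpace_finite (Set.range (fun s => A.mulVec (u s)) ∪ Set.range p)
    (Set.range A.mulVec)
  let Ψ : V →ₗ[ℂ] Fin (n + 1) → ℂ := LinearMap.pi fun i =>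
    (if i = i₁ then ψ₁ else if i = i₂ then ψ₂ else triLin (p k) (p k') (Pi.single i 1)) ∘ₗ V.subtype
  have hΨ : ∀ f i, i ≠ i₁ → i ≠ i₂ →
      Ψ f i = tri (f : MvPolynomial _ ℂ) (p k) (p k') (Pi.single i 1) := by
    intro f i h1 h2
    simp [Ψ, h1, h2]
  have hinj : Function.Injective Ψ := by
    rw [← LinearMap.ker_eq_bot, LinearMap.ker_eq_bot']
    rintro ⟨f, hfV⟩ h0
    refine Subtype.ext (hf f hfV (fun i h1 h2 => ?_) ?_ ?_)
    · rw [← hΨ ⟨f, hfV⟩ i h1 h2, h0]; rfl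
    · simpa [Ψ] using congrFun h0 i₁
    · simpa [Ψ, hi.symm] using congrFun h0 i₂
  refine ⟨?_, ?_, ?_⟩
  · simpa using LinearMap.finrank_le_finrank_of_injective hinj
  · intro h0
    simp [h0] at hD
  · intro hn hV q hq
    have hsurj : Function.Surjective Ψ :=
      (LinearMap.injective_iff_surjective_of_finrank_eq_finrank (by simpa using hV)).1 hinj
    have hp : ∀ f ∈ V, ∀ j y, tri f (p j) (p j) y = 0 := fun f hfV j y =>
      (mem_SingSpace_iff.1 hfV).2.2 _ (Or.inr ⟨j, rfl⟩) y
    set D := p k i₁ * p k' i₂ - p k i₂ * p k' i₁ with hDdef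
    -- remove the coordinates `i₁` and `i₂` of `q` with a combination of `p k` and `p k'`
    set α := (q i₁ * p k' i₂ - q i₂ * p k' i₁) / D with hα
    set β := (p k i₁ * q i₂ - p k i₂ * q i₁) / D with hβ
    set q' := q - α • p k - β • p k' with hq'
    have h1 : q' i₁ = 0 := by
      simp only [hq', Pi.sub_apply, Pi.smul_apply, smul_eq_mul, hα, hβ]
      field_simp
      rw [hDdef]; ring
    have h2 : q' i₂ = 0 := by
      simp only [hq', Pi.sub_apply, Pi.smul_apply, smul_eq_mul, hα, hβ]
      field_simp
      rw [hDdef]; ring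
    have hsum : ∀ f : V, ∑ i, q' i * Ψ f i = 0 := by
      rintro ⟨f, hfV⟩
      have e1 : tri f (p k) (p k') q' = 0 := by
        have a1 := hq f hfV (p k')
        have a2 := hp f hfV k (p k')
        have a3 := hp f hfV k' (p k)
        rw [tri_swap23] at a1 a2
        rw [tri_swap23, tri_swap12] at a3
        simp only [hq', map_sub, map_smul, a1, a2, a3]
        simp
      rw [tri_eq_sum] at e1
      rw [← e1]
      refine Finset.sum_congr rfl fun i _ => ?_
      by_cases hi1 : i = i₁
      · rw [hi1, h1, zero_mul, zero_mul]
      by_cases hi2 : i = i₂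
      · rw [hi2, h2, zero_mul, zero_mul]
      rw [hΨ _ i hi1 hi2]
    -- since `Ψ` is onto, a linear relation between its coordinates is trivial
    have hq0 : q' = 0 := by
      ext j
      obtain ⟨f, hf⟩ := hsurj (Pi.single j 1)
      simpa [hf, Pi.single_apply] using hsum f
    have hqe : q = α • p k + β • p k' := by
      rw [← sub_eq_zero, ← hq0, hq']; abel
    -- some cubic has `tri f (p k) (p k')` nonzero in a direction `j`, which excludes `p k'`
    obtain ⟨j, hj⟩ : ∃ j, j ∉ ({i₁, i₂} : Finset (Fin (n + 1))) := by
      by_contra! hall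
      have := Finset.card_le_card (fun x _ => hall x : (Finset.univ : Finset (Fin (n + 1))) ⊆ _)
      have h2 := Finset.card_le_two (a := i₁) (b := i₂)
      rw [Finset.card_univ, Fintype.card_fin] at this
      omega
    simp only [Finset.mem_insert, Finset.mem_singleton, not_or] at hj
    obtain ⟨f, hf⟩ := hsurj (Pi.single j 1)
    have hfj := hΨ f j hj.1 hj.2
    rw [hf, Pi.single_eq_same] at hfj
    have := hq f f.2 (Pi.single j 1)
    rw [hqe] at this
    simp only [map_add, map_smul, LinearMap.add_apply, LinearMap.smul_apply, ← hfj,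
      hp f f.2 k, smul_eq_mul, mul_one, mul_zero, zero_add] at this
    exact ⟨α, by rw [hqe, this]; simp⟩

/-- The common singular locus is zero-dimensional at a point where the Hessians have the smallest
possible common kernel. For two singular points `p` and `q` of `f`, the vector `q - p` lies in the
kernel of the Hessian of `f` at `p + q`. At `2 • p` this kernel contains no nonzero vector with `i₀`-th
coordinate zero if `p i₀ ≠ 0`, and that persists nearby. -/
lemma isolated {V : Submodule ℂ (MvPolynomial (Fin (n + 1)) ℂ)} {p : Fin (n + 1) → ℂ} (hp0 : p ≠ 0)
    (hp : ∀ f ∈ V, ∀ y, tri f p p y = 0)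
    (hess : ∀ q, (∀ f ∈ V, ∀ y, tri f p q y = 0) → ∃ c : ℂ, q = c • p) :
    ∃ ε > 0, ∀ q, (∀ f ∈ V, ∀ y, tri f q q y = 0) → dist q p < ε → ∃ c : ℂ, q = c • p := by
  classical
  obtain ⟨i₀, hi₀⟩ : ∃ i, p i ≠ 0 := Function.ne_iff.1 hp0
  let Φ : (V × Fin (n + 1)) ⊕ Unit → (Fin (n + 1) → ℂ) →ₗ[ℂ] MvPolynomial (Fin (n + 1)) ℂ :=
    Sum.elim (fun q => ∑ a, ((tri (q.1 : MvPolynomial _ ℂ) (Pi.single a 1)).flip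
      (Pi.single q.2 1)).smulRight (X a)) fun _ => (LinearMap.proj (φ := fun _ => ℂ) i₀).smulRight 1
  have hΦ1 : ∀ t (f : V) i h, eval t (Φ (Sum.inl (f, i)) h) =
      tri (f : MvPolynomial _ ℂ) t h (Pi.single i 1) := by
    intro t f i h
    rw [tri_swap12, tri_swap23, tri_eq_sum]
    simp only [Φ, Sum.elim_inl, LinearMap.sum_apply, LinearMap.smulRight_apply, map_sum, smul_eval,
      eval_X, LinearMap.flip_apply]
    refine Finset.sum_congr rfl fun a _ => ?_
    rw [mul_comm, tri_swap12, tri_swap23]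
  have hΦ2 : ∀ t h, eval t (Φ (Sum.inr ()) h) = h i₀ := by
    intro t h
    simp [Φ, smul_eval]
  obtain ⟨F, hF, hFt⟩ := exists_minor Φ ((2 : ℂ) • p) (by
    intro h h0
    obtain ⟨c, rfl⟩ := hess h fun f hf y => by
      rw [tri_eq_sum]
      refine Finset.sum_eq_zero fun i _ => ?_
      have := h0 (Sum.inl (⟨f, hf⟩, i))
      rw [hΦ1] at this
      have h2 : 2 * tri f p h (Pi.single i 1) = 0 := by simpa using this
      rw [(mul_eq_zero.1 h2).resolve_left two_ne_zero, mul_zero]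
    have := h0 (Sum.inr ())
    rw [hΦ2] at this
    have hc : c = 0 := by simpa [hi₀] using this
    rw [hc, zero_smul])
  -- a point `q` near `p` can be rescaled so as to have the same coordinate `i₀` as `p`
  have hcont : ContinuousAt (fun q : Fin (n + 1) → ℂ => eval (p + (p i₀ / q i₀) • q) F) p := by
    have h1 : ContinuousAt (fun q : Fin (n + 1) → ℂ => p + (p i₀ / q i₀) • q) p := by
      refine continuousAt_const.add (ContinuousAt.fun_smul ?_ continuousAt_id)
      exact continuousAt_const.div (continuous_apply i₀).continuousAt hi₀
    exact (MvPolynomial.continuous_eval F).continuousAt.comp h1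
  have hne : eval (p + (p i₀ / p i₀) • p) F ≠ 0 := by
    rw [div_self hi₀, one_smul, ← two_smul ℂ p]; exact hF
  obtain ⟨ε, hε, h⟩ := Metric.eventually_nhds_iff.1
    ((hcont.eventually_ne hne).and ((continuous_apply i₀).continuousAt.eventually_ne hi₀))
  refine ⟨ε, hε, fun q hq hdist => ?_⟩
  obtain ⟨h1, h2⟩ := h hdist
  set c := p i₀ / q i₀ with hc
  have hc0 : c ≠ 0 := div_ne_zero hi₀ h2
  have hz := hFt _ h1 (c • q - p) (by
    rintro (⟨f, i⟩ | _)
    · rw [hΦ1]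
      have a1 := hq f f.2 (Pi.single i 1)
      have a2 := hp f f.2 (Pi.single i 1)
      simp only [map_add, map_sub, map_smul, LinearMap.add_apply, LinearMap.sub_apply,
        LinearMap.smul_apply, smul_eq_mul, a1, a2, tri_swap12 _ q p]
      ring
    · rw [hΦ2]
      simp [hc, h2])
  refine ⟨c⁻¹, ?_⟩
  rw [← sub_eq_zero.1 hz, smul_smul, inv_mul_cancel₀ hc0, one_smul]

end Rigid

theorem cubics_one_codim3_subspace (n : ℕ) (hn : 6 ≤ n) (h3 : n % 3 ≠ 2) :
    Generic
      (ι := (Fin (n + 1) × Fin (n - 2)) ⊕ (Fin (n * (n - 1) / 6) × Fin (n - 2)) ⊕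
        (Fin n × Fin (n + 1))) fun t =>
      let A : Matrix (Fin (n + 1)) (Fin (n - 2)) ℂ := Matrix.of fun i j => t (Sum.inl (i, j))
      let l : Fin (n * (n - 1) / 6) → Fin (n + 1) → ℂ :=
        fun s => A.mulVec fun j => t (Sum.inr (Sum.inl (s, j)))
      let p : Fin n → Fin (n + 1) → ℂ := fun k i => t (Sum.inr (Sum.inr (k, i)))
      let U : Set (Fin (n + 1) → ℂ) := Set.range A.mulVec
      let S : Set (Fin (n + 1) → ℂ) := Set.range l ∪ Set.range p
      Function.Injective A.mulVec ∧
      Module.finrank ℂ (SingSpace n 3 S U) = n + 1 ∧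
      ∀ k : Fin n, ∃ ε > 0, ∀ q : Fin (n + 1) → ℂ,
        (∀ f ∈ SingSpace n 3 S U, SingularAt f q) → dist q (p k) < ε →
        ∃ c : ℂ, q = c • p k := by
  choose A₀ u₀ p₀ hR₀ using exists_special hn h3
  choose F hF0 hF using fun k => (hR₀ k).generic
  refine ⟨∏ k, F k, Finset.prod_ne_zero_iff.2 fun k _ => hF0 k, fun t ht => ?_⟩
  rw [map_prod, Finset.prod_ne_zero_iff] at ht
  have hR := fun k => hF k t (ht k (Finset.mem_univ k))
  intro A l p U S
  have hA : Function.Injective A.mulVec := by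
    obtain ⟨_, _, _, _, _, _, _, hA, _⟩ := hR ⟨0, by omega⟩
    exact hA
  have hfr : Module.finrank ℂ (SingSpace n 3 S U) = n + 1 :=
    le_antisymm (hR ⟨0, by omega⟩).finrank_le.1 (le_finrank hn h3 hA _ _)
  refine ⟨hA, hfr, fun k => ?_⟩
  obtain ⟨-, hp0, hess⟩ := (hR k).finrank_le
  obtain ⟨ε, hε, h⟩ := isolated (V := SingSpace n 3 S U) hp0
    (fun f hf y => (mem_SingSpace_iff.1 hf).2.2 _ (Or.inr ⟨k, rfl⟩) y)
    (hess (by omega) hfr)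
  refine ⟨ε, hε, fun q hq => h q fun f hf y => ?_⟩
  rw [tri_eq_sum]
  refine Finset.sum_eq_zero fun i _ => ?_
  rw [tri_self_single (mem_SingSpace_iff.1 hf).1, hq f hf i]
  simp
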